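/- arXiv:2503.18436 — 6 statements merged into one kernel-verified Lean document; each statement's English description precedes it below -/
import Mathlib

section
/- Let (Ξ, d) be a nonempty separable complete metric space, let ℓ : Ξ → ℝ be Borel measurable and bounded above by a Lipschitz function, i.e. there exist L₀ ≥ 0, c₀ ∈ ℝ and ξ₀ ∈ Ξ with ℓ(ξ) ≤ c₀ + L₀·d(ξ, ξ₀) for all ξ ∈ Ξ. Fix data points ξ̂₁, …, ξ̂_N ∈ Ξ and a radius ρ > 0. Then the supremum of (1/N)·∑_{i=1}^N ∫_Ξ ℓ dP_i, taken over all N-tuples (P₁, …, P_N) of Borel probability measures on Ξ satisfying (1/N)·∑_{i=1}^N ∫_Ξ d(ξ, ξ̂_i) P_i(dξ) ≤ ρ, equals the infimum over λ ≥ 0 of ρλ + (1/N)·∑_{i=1}^N sup_{ξ ∈ Ξ} [ℓ(ξ) − λ·d(ξ, ξ̂_i)] (both sides taking values in ℝ ∪ {+∞}). -/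
open MeasureTheory
open scoped ENNReal

/-- Extended-real valued integral of a real function: positive part minus negative part,
well defined in `[-∞, +∞)` whenever the positive part is finite. -/
noncomputable def extInt {Ξ : Type*} [MeasurableSpace Ξ] (μ : Measure Ξ) (f : Ξ → ℝ) : EReal :=
  ((∫⁻ ξ, ENNReal.ofReal (f ξ) ∂μ : ℝ≥0∞) : EReal) -
    ((∫⁻ ξ, ENNReal.ofReal (-(f ξ)) ∂μ : ℝ≥0∞) : EReal)

/-!
The pairs (transport cost, expected loss) attained by tuples of probability measures form a convex
planar set containing all pairs attained by tuples of Dirac measures. If `M` bounds the losses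
within the cost budget, and some pair lies strictly within the budget, then a line of slope
`lam ≥ 0` through the point (budget, `M`) lies above the whole set. Evaluated on Dirac measures,
this says that the dual objective at `lam` is at most `M`. The converse inequality integrates the
pointwise bound `ℓ ≤ lam * c + ⨆ ξ, (ℓ ξ - lam * c ξ)`.
-/

section EReal

theorem coe_sum_eq_sum_coe {ι : Type*} (s : Finset ι) (f : ι → ℝ) :
    ((∑ i ∈ s, f i : ℝ) : EReal) = ∑ i ∈ s, (f i : EReal) :=
  map_sum (⟨⟨Real.toEReal, EReal.coe_zero⟩, EReal.coe_add⟩ : ℝ →+ EReal) f s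

theorem coe_inv_mul_le_coe_iff {a b : ℝ} (ha : 0 < a) {x : EReal} :
    ((a⁻¹ : ℝ) : EReal) * x ≤ b ↔ x ≤ ((a * b : ℝ) : EReal) := by
  rw [EReal.coe_inv, mul_comm, ← div_eq_mul_inv,
    EReal.div_le_iff_le_mul (EReal.coe_pos.2 ha) (EReal.coe_ne_top a), ← EReal.coe_mul]

theorem sum_iSup_coe_le_coe {ι : Type*} {α : ι → Type*} [∀ i, Nonempty (α i)] {s : Finset ι}
    {f : ∀ i, α i → ℝ} {K : ℝ} (h : ∀ x : ∀ i, α i, ∑ i ∈ s, f i (x i) ≤ K) :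
    ∑ i ∈ s, ⨆ x, (f i x : EReal) ≤ K := by
  classical
  induction s using Finset.induction_on generalizing K with
  | empty => simpa using h fun _ => Classical.arbitrary _
  | insert a s ha ih =>
    have hrest (y : α a) : ∑ i ∈ s, ⨆ x, (f i x : EReal) ≤ ((K - f a y : ℝ) : EReal) := by
      refine ih fun x => le_sub_iff_add_le'.2 ?_
      have hupdate : ∑ i ∈ s, f i (Function.update x a y i) = ∑ i ∈ s, f i (x i) :=
        Finset.sum_congr rfl fun i hi => by
          rw [Function.update_of_ne (ne_of_mem_of_not_mem hi ha)]
      simpa [Finset.sum_insert ha, hupdate] using h (Function.update x a y)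
    rw [Finset.sum_insert ha]
    refine EReal.add_le_of_forall_lt fun u hu v hv => ?_
    obtain ⟨y, hy⟩ := lt_iSup_iff.1 hu
    calc u + v ≤ (f a y : EReal) + ((K - f a y : ℝ) : EReal) :=
          add_le_add hy.le (hv.le.trans (hrest y))
      _ = K := by rw [← EReal.coe_add, add_sub_cancel]

end EReal

section ExtInt

variable {Ξ : Type*} [MeasurableSpace Ξ] {μ : Measure Ξ} {f g : Ξ → ℝ}

theorem extInt_eq_integral (hf : Integrable f μ) : extInt μ f = ((∫ ξ, f ξ ∂μ : ℝ) : EReal) := by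
  rw [extInt, integral_eq_lintegral_pos_part_sub_lintegral_neg_part hf, EReal.coe_sub,
    EReal.coe_ennreal_toReal hf.lintegral_lt_top.ne,
    EReal.coe_ennreal_toReal (Integrable.lintegral_lt_top (f := fun ξ => -f ξ) hf.neg).ne]

theorem extInt_mono (h : f ≤ᵐ[μ] g) : extInt μ f ≤ extInt μ g := by
  refine EReal.sub_le_sub ?_ ?_ <;> refine EReal.coe_ennreal_le_coe_ennreal_iff.2 ?_ <;>
    refine lintegral_mono_ae (h.mono fun ξ hξ => ENNReal.ofReal_le_ofReal ?_)
  · exact hξ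
  · exact neg_le_neg hξ

theorem extInt_le_integral_add_iSup_sub [IsProbabilityMeasure μ] (hg : Integrable g μ) :
    extInt μ f ≤ ((∫ ξ, g ξ ∂μ : ℝ) : EReal) + ⨆ ξ, ((f ξ - g ξ : ℝ) : EReal) := by
  have sub_le_iff (x : EReal) : extInt μ f - ((∫ ξ, g ξ ∂μ : ℝ) : EReal) ≤ x ↔
      extInt μ f ≤ ((∫ ξ, g ξ ∂μ : ℝ) : EReal) + x := by
    rw [EReal.sub_le_iff_le_add (.inl (EReal.coe_ne_bot _)) (.inl (EReal.coe_ne_top _)), add_comm]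
  refine (sub_le_iff _).1 (EReal.le_of_forall_lt_iff_le.1 fun s hs => (sub_le_iff _).2 ?_)
  have hfg (ξ : Ξ) : f ξ ≤ g ξ + s :=
    sub_le_iff_le_add'.1 (EReal.coe_le_coe_iff.1 ((le_iSup _ ξ).trans hs.le))
  calc extInt μ f ≤ extInt μ fun ξ => g ξ + s := extInt_mono (.of_forall hfg)
    _ = ((∫ ξ, g ξ ∂μ : ℝ) : EReal) + s := by
      rw [extInt_eq_integral (f := fun ξ => g ξ + s) (hg.add (integrable_const s)),
        integral_add hg (integrable_const s), integral_const, probReal_univ, one_smul,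
        EReal.coe_add]

end ExtInt

section Multiplier

variable {C : Set (ℝ × ℝ)} {r M : ℝ}

/-- The segment from `p` to `q` crosses the line `{r} × ℝ` in a point of `C`, at height at most `M`;
hence the slope from `(r, M)` to `p` is at most the slope from `q` to `(r, M)`. -/
theorem sub_mul_sub_le_of_convex (hC : Convex ℝ C) (hM : ∀ p ∈ C, p.1 = r → p.2 ≤ M)
    {p q : ℝ × ℝ} (hp : p ∈ C) (hq : q ∈ C) (hqr : q.1 < r) (hrp : r < p.1) :
    (p.2 - M) * (r - q.1) ≤ (M - q.2) * (p.1 - r) := by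
  have hpq : 0 < p.1 - q.1 := sub_pos.2 (hqr.trans hrp)
  have hmem : ((r - q.1) / (p.1 - q.1)) • p + ((p.1 - r) / (p.1 - q.1)) • q ∈ C :=
    hC hp hq (div_nonneg (sub_nonneg.2 hqr.le) hpq.le) (div_nonneg (sub_nonneg.2 hrp.le) hpq.le)
      (by field_simp; ring)
  have hcross : (r - q.1) / (p.1 - q.1) * p.2 + (p.1 - r) / (p.1 - q.1) * q.2 ≤ M :=
    hM _ hmem (by simp only [Prod.fst_add, Prod.smul_fst, smul_eq_mul]; field_simp; ring)
  have hcleared : (r - q.1) * p.2 + (p.1 - r) * q.2 ≤ M * (p.1 - q.1) := by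
    rw [← div_le_iff₀ hpq]
    exact le_of_eq_of_le (by ring) hcross
  linarith

theorem exists_nonneg_slope_of_convex (hC : Convex ℝ C) (hM : ∀ p ∈ C, p.1 ≤ r → p.2 ≤ M)
    {p₀ : ℝ × ℝ} (hp₀ : p₀ ∈ C) (hslater : p₀.1 < r) :
    ∃ lam : ℝ, 0 ≤ lam ∧ ∀ p ∈ C, p.2 ≤ M + lam * (p.1 - r) := by
  let slopesRight : Set ℝ := (fun p : ℝ × ℝ => (p.2 - M) / (p.1 - r)) '' {p ∈ C | r < p.1}
  let slopesLeft : Set ℝ := (fun p : ℝ × ℝ => (M - p.2) / (r - p.1)) '' {p ∈ C | p.1 < r}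
  have hne : slopesLeft.Nonempty := ⟨_, p₀, ⟨hp₀, hslater⟩, rfl⟩
  have hle : ∀ x ∈ insert 0 slopesRight, ∀ y ∈ slopesLeft, x ≤ y := by
    rintro x (rfl | ⟨p, ⟨hp, hrp⟩, rfl⟩) _ ⟨q, ⟨hq, hqr⟩, rfl⟩
    · exact div_nonneg (sub_nonneg.2 (hM q hq hqr.le)) (sub_nonneg.2 hqr.le)
    · exact (div_le_div_iff₀ (sub_pos.2 hrp) (sub_pos.2 hqr)).2 <|
        sub_mul_sub_le_of_convex hC (fun p hp hpr => hM p hp hpr.le) hp hq hqr hrp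
  obtain ⟨lam, hright, hleft⟩ := exists_between_of_forall_le (Set.insert_nonempty _ _) hne hle
  refine ⟨lam, hright (Set.mem_insert _ _), fun p hp => ?_⟩
  rcases lt_trichotomy p.1 r with hpr | hpr | hrp
  · have := (le_div_iff₀ (sub_pos.2 hpr)).1 (hleft ⟨p, ⟨hp, hpr⟩, rfl⟩)
    linarith
  · simpa [hpr] using hM p hp hpr.le
  · have := (div_le_iff₀ (sub_pos.2 hrp)).1 (hright (Set.mem_insert_of_mem _ ⟨p, ⟨hp, hrp⟩, rfl⟩))
    linarith

end Multiplier

theorem integral_convex_combination {α : Type*} [MeasurableSpace α] {μ ν : Measure α} {f : α → ℝ}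
    (hμ : Integrable f μ) (hν : Integrable f ν) {a b : ℝ} (ha : 0 ≤ a) (hb : 0 ≤ b) :
    ∫ x, f x ∂(ENNReal.ofReal a • μ + ENNReal.ofReal b • ν) =
      a * ∫ x, f x ∂μ + b * ∫ x, f x ∂ν := by
  rw [integral_add_measure (hμ.smul_measure ENNReal.ofReal_ne_top)
    (hν.smul_measure ENNReal.ofReal_ne_top), integral_smul_measure, integral_smul_measure,
    ENNReal.toReal_ofReal ha, ENNReal.toReal_ofReal hb, smul_eq_mul, smul_eq_mul]

section Transport

variable {ι : Type*} [Fintype ι] {Ξ : ι → Type*} [∀ i, MeasurableSpace (Ξ i)]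
  {c ℓ : ∀ i, Ξ i → ℝ} {r : ℝ}

theorem sum_lintegral_ofReal_le_ofReal_iff {P : ∀ i, Measure (Ξ i)}
    (hc : ∀ i, Integrable (c i) (P i)) (hc₀ : ∀ i ξ, 0 ≤ c i ξ) (hr : 0 ≤ r) :
    ∑ i, ∫⁻ ξ, ENNReal.ofReal (c i ξ) ∂P i ≤ ENNReal.ofReal r ↔
      ∑ i, ∫ ξ, c i ξ ∂P i ≤ r := by
  simp_rw [← fun i => ofReal_integral_eq_lintegral_ofReal (hc i) (.of_forall (hc₀ i))]
  rw [← ENNReal.ofReal_sum_of_nonneg fun i _ => integral_nonneg (hc₀ i),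
    ENNReal.ofReal_le_ofReal_iff hr]

/-- The tuples of probability measures admissible in the primal problem: those of total expected
cost at most `r`. The cost is a Lebesgue integral, so that tuples of infinite cost are excluded. -/
def budgetSet (c : ∀ i, Ξ i → ℝ) (r : ℝ) : Set (∀ i, Measure (Ξ i)) :=
  {P | (∀ i, IsProbabilityMeasure (P i)) ∧
    ∑ i, ∫⁻ ξ, ENNReal.ofReal (c i ξ) ∂P i ≤ ENNReal.ofReal r}

/-- The dual objective at the multiplier `lam`: the supremum of the Lagrangian
`∑ i, ℓ i (x i) + lam * (r - ∑ i, c i (x i))`, which separates over `i`. -/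
noncomputable def lagrangeDual (c ℓ : ∀ i, Ξ i → ℝ) (r lam : ℝ) : EReal :=
  ((r * lam : ℝ) : EReal) + ∑ i, ⨆ ξ, ((ℓ i ξ - lam * c i ξ : ℝ) : EReal)

/-- The pairs (total expected cost, total expected loss) attained by tuples of probability measures
for which both are finite. -/
def costLossSet (c ℓ : ∀ i, Ξ i → ℝ) : Set (ℝ × ℝ) :=
  {p | ∃ P : ∀ i, Measure (Ξ i), (∀ i, IsProbabilityMeasure (P i)) ∧
    (∀ i, Integrable (c i) (P i)) ∧ (∀ i, Integrable (ℓ i) (P i)) ∧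
    p = (∑ i, ∫ ξ, c i ξ ∂P i, ∑ i, ∫ ξ, ℓ i ξ ∂P i)}

theorem convex_costLossSet : Convex ℝ (costLossSet c ℓ) := by
  rintro _ ⟨P, hP, hPc, hPℓ, rfl⟩ _ ⟨Q, hQ, hQc, hQℓ, rfl⟩ a b ha hb hab
  have integrable_mix {i : ι} {f : Ξ i → ℝ} (hfP : Integrable f (P i)) (hfQ : Integrable f (Q i)) :
      Integrable f (ENNReal.ofReal a • P i + ENNReal.ofReal b • Q i) :=
    (hfP.smul_measure ENNReal.ofReal_ne_top).add_measure (hfQ.smul_measure ENNReal.ofReal_ne_top)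
  refine ⟨fun i => ENNReal.ofReal a • P i + ENNReal.ofReal b • Q i, fun i => ⟨?_⟩,
    fun i => integrable_mix (hPc i) (hQc i), fun i => integrable_mix (hPℓ i) (hQℓ i), ?_⟩
  · simp [← ENNReal.ofReal_add ha hb, hab]
  · simp_rw [fun i => integral_convex_combination (hPc i) (hQc i) ha hb,
      fun i => integral_convex_combination (hPℓ i) (hQℓ i) ha hb,
      Finset.sum_add_distrib, ← Finset.mul_sum]
    rfl

theorem dirac_mem_costLossSet (hc : ∀ i, Measurable (c i)) (hℓ : ∀ i, Measurable (ℓ i))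
    (x : ∀ i, Ξ i) : (∑ i, c i (x i), ∑ i, ℓ i (x i)) ∈ costLossSet c ℓ :=
  ⟨fun i => Measure.dirac (x i), fun _ => inferInstance,
    fun i => integrable_dirac' (hc i).stronglyMeasurable enorm_lt_top,
    fun i => integrable_dirac' (hℓ i).stronglyMeasurable enorm_lt_top, by
      simp_rw [fun i => integral_dirac' (c i) (x i) (hc i).stronglyMeasurable,
        fun i => integral_dirac' (ℓ i) (x i) (hℓ i).stronglyMeasurable]⟩

theorem snd_le_of_mem_costLossSet (hc₀ : ∀ i ξ, 0 ≤ c i ξ) (hr : 0 ≤ r) {M : ℝ}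
    (hM : ∀ P ∈ budgetSet c r, ∑ i, extInt (P i) (ℓ i) ≤ M) {p : ℝ × ℝ}
    (hp : p ∈ costLossSet c ℓ) (hpr : p.1 ≤ r) : p.2 ≤ M := by
  obtain ⟨P, hP, hPc, hPℓ, rfl⟩ := hp
  have hloss := hM P ⟨hP, (sum_lintegral_ofReal_le_ofReal_iff hPc hc₀ hr).2 hpr⟩
  simpa only [fun i => extInt_eq_integral (hPℓ i), ← coe_sum_eq_sum_coe,
    EReal.coe_le_coe_iff] using hloss

theorem exists_lagrangeDual_le (hc : ∀ i, Measurable (c i)) (hc₀ : ∀ i ξ, 0 ≤ c i ξ)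
    (hℓ : ∀ i, Measurable (ℓ i)) {x₀ : ∀ i, Ξ i} (hslater : ∑ i, c i (x₀ i) < r) {M : ℝ}
    (hM : ∀ P ∈ budgetSet c r, ∑ i, extInt (P i) (ℓ i) ≤ M) :
    ∃ lam : ℝ, 0 ≤ lam ∧ lagrangeDual c ℓ r lam ≤ M := by
  have hr : 0 ≤ r := (Finset.sum_nonneg fun i _ => hc₀ i (x₀ i)).trans hslater.le
  obtain ⟨lam, hlam, hline⟩ := exists_nonneg_slope_of_convex convex_costLossSet
    (fun _ hp hpr => snd_le_of_mem_costLossSet hc₀ hr hM hp hpr)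
    (dirac_mem_costLossSet hc hℓ x₀) hslater
  have hpointwise (x : ∀ i, Ξ i) : ∑ i, (ℓ i (x i) - lam * c i (x i)) ≤ M - r * lam := by
    have := hline _ (dirac_mem_costLossSet hc hℓ x)
    rw [Finset.sum_sub_distrib, ← Finset.mul_sum]
    linarith
  have (i : ι) : Nonempty (Ξ i) := ⟨x₀ i⟩
  refine ⟨lam, hlam, ?_⟩
  calc lagrangeDual c ℓ r lam ≤ ((r * lam : ℝ) : EReal) + ((M - r * lam : ℝ) : EReal) :=
        add_le_add_right (sum_iSup_coe_le_coe hpointwise) _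
    _ = M := by rw [← EReal.coe_add, add_sub_cancel]

theorem sum_extInt_le_lagrangeDual (hc : ∀ i, Measurable (c i)) (hc₀ : ∀ i ξ, 0 ≤ c i ξ)
    (hr : 0 ≤ r) {P : ∀ i, Measure (Ξ i)} (hP : P ∈ budgetSet c r) {lam : ℝ} (hlam : 0 ≤ lam) :
    ∑ i, extInt (P i) (ℓ i) ≤ lagrangeDual c ℓ r lam := by
  obtain ⟨hprob, hbudget⟩ := hP
  have hint (i : ι) : Integrable (c i) (P i) :=
    (lintegral_ofReal_ne_top_iff_integrable (hc i).aestronglyMeasurable (.of_forall (hc₀ i))).1 <|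
      ENNReal.sum_ne_top.1 (ne_top_of_le_ne_top ENNReal.ofReal_ne_top hbudget) i (Finset.mem_univ i)
  have hcost : ∑ i, ∫ ξ, lam * c i ξ ∂P i ≤ r * lam := by
    simp_rw [integral_const_mul, ← Finset.mul_sum, mul_comm r]
    gcongr
    exact (sum_lintegral_ofReal_le_ofReal_iff hint hc₀ hr).1 hbudget
  calc ∑ i, extInt (P i) (ℓ i)
      ≤ ∑ i, (((∫ ξ, lam * c i ξ ∂P i : ℝ) : EReal) +
          ⨆ ξ, ((ℓ i ξ - lam * c i ξ : ℝ) : EReal)) :=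
        Finset.sum_le_sum fun i _ => extInt_le_integral_add_iSup_sub ((hint i).const_mul lam)
    _ ≤ lagrangeDual c ℓ r lam := by
        rw [Finset.sum_add_distrib, ← coe_sum_eq_sum_coe]
        exact add_le_add_left (EReal.coe_le_coe_iff.2 hcost) _

end Transport

/-- If the positive and negative parts of some `ℓ i` both have infinite integral, then `extInt` is
`⊤ - ⊤ = ⊥`, so that such tuples `P` do not affect the supremum. -/
theorem wasserstein_strong_duality_general {ι : Type*} [Fintype ι] [Nonempty ι] {Ξ : ι → Type*}
    [∀ i, MeasurableSpace (Ξ i)] {c ℓ : ∀ i, Ξ i → ℝ} (hc : ∀ i, Measurable (c i))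
    (hc₀ : ∀ i ξ, 0 ≤ c i ξ) (hℓ : ∀ i, Measurable (ℓ i)) {ρ : ℝ} {x₀ : ∀ i, Ξ i}
    (hslater : ∑ i, c i (x₀ i) < Fintype.card ι * ρ) :
    sSup {v : EReal | ∃ P : ∀ i, Measure (Ξ i),
        (∀ i, IsProbabilityMeasure (P i)) ∧
        (∑ i, ∫⁻ ξ, ENNReal.ofReal (c i ξ) ∂P i) / (Fintype.card ι : ℝ≥0∞) ≤ ENNReal.ofReal ρ ∧
        v = (((Fintype.card ι : ℝ)⁻¹ : ℝ) : EReal) * ∑ i, extInt (P i) (ℓ i)} =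
    ⨅ (lam : ℝ) (_ : 0 ≤ lam),
      ((ρ * lam : ℝ) : EReal) + (((Fintype.card ι : ℝ)⁻¹ : ℝ) : EReal) *
        ∑ i, ⨆ ξ, ((ℓ i ξ - lam * c i ξ : ℝ) : EReal) := by
  set n := Fintype.card ι
  have hn : (0 : ℝ) < n := Nat.cast_pos.2 Fintype.card_pos
  have hinv : (0 : EReal) ≤ (((n : ℝ)⁻¹ : ℝ) : EReal) := EReal.coe_nonneg.2 (inv_pos.2 hn).le
  have hr : 0 ≤ n * ρ := (Finset.sum_nonneg fun i _ => hc₀ i (x₀ i)).trans hslater.le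
  have hbudget (x : ℝ≥0∞) : x / n ≤ ENNReal.ofReal ρ ↔ x ≤ ENNReal.ofReal (n * ρ) := by
    rw [ENNReal.div_le_iff' (by simp [n]) (ENNReal.natCast_ne_top n), ENNReal.ofReal_mul hn.le,
      ENNReal.ofReal_natCast]
  have hdual (lam : ℝ) : ((ρ * lam : ℝ) : EReal) + (((n : ℝ)⁻¹ : ℝ) : EReal) *
        ∑ i, ⨆ ξ, ((ℓ i ξ - lam * c i ξ : ℝ) : EReal) =
      (((n : ℝ)⁻¹ : ℝ) : EReal) * lagrangeDual c ℓ (n * ρ) lam := by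
    rw [lagrangeDual, EReal.left_distrib_of_nonneg_of_ne_top hinv (EReal.coe_ne_top _),
      ← EReal.coe_mul, mul_assoc, inv_mul_cancel_left₀ hn.ne']
  simp_rw [hbudget, hdual]
  apply le_antisymm
  · refine sSup_le ?_
    rintro _ ⟨P, hprob, hcost, rfl⟩
    exact le_iInf₂ fun lam hlam => mul_le_mul_of_nonneg_left
      (sum_extInt_le_lagrangeDual hc hc₀ hr ⟨hprob, hcost⟩ hlam) hinv
  · refine EReal.le_of_forall_lt_iff_le.1 fun M hM => ?_
    have hprimal : ∀ P ∈ budgetSet c (n * ρ), ∑ i, extInt (P i) (ℓ i) ≤ ((n * M : ℝ) : EReal) := by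
      refine fun P hP => (coe_inv_mul_le_coe_iff hn).1 (le_trans (le_sSup ?_) hM.le)
      exact ⟨P, hP.1, hP.2, rfl⟩
    obtain ⟨lam, hlam, hle⟩ := exists_lagrangeDual_le hc hc₀ hℓ hslater hprimal
    exact (iInf₂_le lam hlam).trans ((coe_inv_mul_le_coe_iff hn).2 hle)

/-- Strong duality for the Wasserstein-constrained worst-case expected loss
(Proposition 1 of the paper). -/
theorem wasserstein_strong_duality
    {Ξ : Type*} [MetricSpace Ξ] [Nonempty Ξ]
    [TopologicalSpace.SeparableSpace Ξ] [CompleteSpace Ξ]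
    [MeasurableSpace Ξ] [BorelSpace Ξ]
    (ℓ : Ξ → ℝ) (hℓ : Measurable ℓ)
    (L₀ c₀ : ℝ) (hL₀ : 0 ≤ L₀) (ξ₀ : Ξ)
    (hbound : ∀ ξ, ℓ ξ ≤ c₀ + L₀ * dist ξ ξ₀)
    (N : ℕ) (hN : 0 < N) (ξhat : Fin N → Ξ)
    (ρ : ℝ) (hρ : 0 < ρ) :
    sSup { v : EReal | ∃ P : Fin N → Measure Ξ,
        (∀ i, IsProbabilityMeasure (P i)) ∧
        (∑ i, ∫⁻ ξ, ENNReal.ofReal (dist ξ (ξhat i)) ∂(P i)) / (N : ℝ≥0∞)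
          ≤ ENNReal.ofReal ρ ∧
        v = (((N : ℝ)⁻¹ : ℝ) : EReal) * ∑ i, extInt (P i) ℓ } =
    ⨅ (lam : ℝ) (_ : 0 ≤ lam),
      ((ρ * lam : ℝ) : EReal) + (((N : ℝ)⁻¹ : ℝ) : EReal) *
        ∑ i, ⨆ ξ : Ξ, ((ℓ ξ - lam * dist ξ (ξhat i) : ℝ) : EReal) := by
  have : Nonempty (Fin N) := Fin.pos_iff_nonempty.1 hN
  simpa using wasserstein_strong_duality_general (Ξ := fun _ : Fin N => Ξ)
    (c := fun i ξ => dist ξ (ξhat i)) (ℓ := fun _ => ℓ) (ρ := ρ) (x₀ := ξhat)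
    (fun _ => measurable_id.dist measurable_const) (fun _ _ => dist_nonneg) (fun _ => hℓ)
    (by simpa using mul_pos (Nat.cast_pos.2 hN) hρ)
end

section
/- Let S, m ∈ ℕ, let q̂ ∈ Δ_S, θ > 0, and p ≥ 1 with conjugate exponent p_* (1/p + 1/p_* = 1), and set Q = {q ∈ Δ_S : ‖q − q̂‖_p ≤ θ}. Let W ⊆ ℝ^m be nonempty, closed and convex; for each s = 1, …, S let N_s ∈ ℕ, ρ_s ≥ 0, and let Ω_s ⊆ ℝ₊ × ℝ^{N_s} × ℝ^m be a nonempty, closed, convex set such that for every w ∈ W the value v_s(w) = inf{ρ_s·λ + (1/N_s)·∑_{i=1}^{N_s} α_i : (λ, α, w) ∈ Ω_s} is finite and w ↦ v_s(w) is lower semicontinuous on W. Then inf_{w ∈ W} max_{q ∈ Q} ∑_{s=1}^S q_s·v_s(w) equals the infimum of q̂ᵀ(z + η) + θ·‖z + γ·e + η‖_{p_*} taken over all w ∈ W, γ ∈ ℝ, η ∈ ℝ₊^S, z ∈ ℝ^S, and (λ_s, α_s) ∈ ℝ × ℝ^{N_s} satisfying (λ_s, α_s, w) ∈ Ω_s and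 z_s = ρ_s·λ_s + (1/N_s)·∑_{i=1}^{N_s} α_{si} for every s = 1, …, S. -/
open scoped ENNReal

/-- The `ℓ_p` norm on `ℝ^S`. -/
noncomputable def lpNorm {S : ℕ} (p : ℝ≥0∞) [Fact (1 ≤ p)] (x : Fin S → ℝ) : ℝ :=
  ‖(WithLp.equiv p (Fin S → ℝ)).symm x‖

/-!
For fixed `w` the inner maximum is a linear functional `q ↦ qᵀu` maximized over the part of the
simplex in a norm ball around `q̂`; Hölder's inequality bounds it by the dual objective. Conversely,
if `M` bounds it, Hahn–Banach separation of the open ball times `(M, ∞)` from the hypograph of the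
functional over the simplex produces a slope `a`. Comparing `a` with the functional at the vertices
of the simplex gives `γ` and `η ≥ 0` with `a = u + γ e + η`, and the ball turns into the dual norm
of `a`. This applies with `u = z` slightly above the infima `v_s(w)`, so the infimum over `z` can be
merged with the outer one.
-/

open scoped Matrix
open WithLp (toLp ofLp)

section ConvexDuality

variable {E : Type*} [NormedAddCommGroup E] [NormedSpace ℝ E]

theorem apply_add_mul_norm_le_of_forall_mem_ball {g : StrongDual ℝ E} {x₀ : E} {r c : ℝ}
    (hr : 0 < r) (h : ∀ x ∈ Metric.ball x₀ r, g x ≤ c) : g x₀ + r * ‖g‖ ≤ c := by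
  suffices ‖g‖ ≤ (c - g x₀) / r by
    rw [le_div_iff₀ hr] at this
    linarith
  by_contra! hlt
  obtain ⟨x, hx, hgx⟩ := g.exists_lt_apply_of_lt_opNorm hlt
  have apply_le : ∀ y : E, ‖y‖ < 1 → g y ≤ (c - g x₀) / r := fun y hy => by
    have hmem : x₀ + r • y ∈ Metric.ball x₀ r := by
      rw [mem_ball_iff_norm, add_sub_cancel_left, norm_smul, Real.norm_of_nonneg hr.le]
      exact mul_lt_of_lt_one_right hr hy
    have hle := h _ hmem
    rw [map_add, map_smul, smul_eq_mul] at hle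
    rw [le_div_iff₀ hr]
    linarith
  refine hgx.not_ge (abs_le'.2 ⟨apply_le x hx, ?_⟩)
  rw [← map_neg]
  exact apply_le (-x) (by rwa [norm_neg])

theorem exists_strongDual_separating_of_concaveOn {K : Set E} {f : E → ℝ} (hf : ConcaveOn ℝ K f)
    {x₀ : E} (hx₀ : x₀ ∈ K) {r : ℝ} (hr : 0 < r) {M : ℝ}
    (hM : ∀ x ∈ K, x ∈ Metric.ball x₀ r → f x ≤ M) :
    ∃ (g : StrongDual ℝ E) (k : ℝ),
      (∀ x ∈ Metric.ball x₀ r, g x ≤ k + M) ∧ ∀ x ∈ K, k + f x ≤ g x := by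
  have hdisj : Disjoint (Metric.ball x₀ r ×ˢ Set.Ioi M) {y : E × ℝ | y.1 ∈ K ∧ y.2 ≤ f y.1} :=
    Set.disjoint_left.2 fun y hy hyf => (hy.2.trans_le hyf.2).not_ge (hM y.1 hyf.1 hy.1)
  obtain ⟨φ, c, hφ_lt, hφ_ge⟩ := geometric_hahn_banach_open
    ((convex_ball x₀ r).prod (convex_Ioi M)) (Metric.isOpen_ball.prod isOpen_Ioi)
    hf.convex_hypograph hdisj
  let β : ℝ := φ (0, 1)
  have hφ (x : E) (t : ℝ) : φ (x, t) = φ (x, 0) + t * β := by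
    have hxt : (x, t) = (x, 0) + t • ((0 : E), (1 : ℝ)) := by simp
    rw [hxt, map_add, map_smul, smul_eq_mul]
  have hx₀_ball : x₀ ∈ Metric.ball x₀ r := Metric.mem_ball_self hr
  have hβ : 0 < -β := by
    have hlt := (hφ_lt (x₀, M + 1) ⟨hx₀_ball, lt_add_one M⟩).trans_le
      (hφ_ge (x₀, f x₀) ⟨hx₀, le_rfl⟩)
    rw [hφ, hφ x₀ (f x₀)] at hlt
    nlinarith [hM x₀ hx₀ hx₀_ball]
  let g : StrongDual ℝ E := (-β)⁻¹ • φ.comp (.inl ℝ E ℝ)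
  have hφg (x : E) (t : ℝ) : φ (x, t) = -β * (g x - t) := by
    have hgx : g x = (-β)⁻¹ * φ (x, 0) := rfl
    rw [hφ, hgx, mul_sub, mul_inv_cancel_left₀ hβ.ne']
    ring
  refine ⟨g, c / -β, fun x hx => ?_, fun x hx => ?_⟩
  · refine sub_le_iff_le_add'.1 (le_of_forall_gt_imp_ge_of_dense fun t ht => ?_)
    have hlt := hφ_lt (x, t) ⟨hx, ht⟩
    rw [hφg, ← lt_div_iff₀' hβ] at hlt
    linarith
  · have hge := hφ_ge (x, f x) ⟨hx, le_rfl⟩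
    rw [hφg, ← div_le_iff₀' hβ] at hge
    linarith

theorem exists_strongDual_add_mul_norm_le {K : Set E} {f : E → ℝ} (hf : ConcaveOn ℝ K f)
    {x₀ : E} (hx₀ : x₀ ∈ K) {r : ℝ} (hr : 0 < r) {M : ℝ}
    (hM : ∀ x ∈ K, x ∈ Metric.ball x₀ r → f x ≤ M) :
    ∃ g : StrongDual ℝ E, ∀ x ∈ K, f x + r * ‖g‖ ≤ M + g (x - x₀) := by
  obtain ⟨g, k, hball, hK⟩ := exists_strongDual_separating_of_concaveOn hf hx₀ hr hM
  refine ⟨g, fun x hx => ?_⟩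
  have hnorm := apply_add_mul_norm_le_of_forall_mem_ball hr hball
  rw [map_sub]
  linarith [hK x hx]

end ConvexDuality

section LpDuality

variable {ι : Type*} [Fintype ι] {p pd : ℝ≥0∞} {a : ι → ℝ} {C : ℝ}

theorem dotProduct_le_norm_toLp_mul_norm_toLp [Fact (1 ≤ p)] [Fact (1 ≤ pd)]
    [p.HolderConjugate pd] (x y : ι → ℝ) : x ⬝ᵥ y ≤ ‖toLp p x‖ * ‖toLp pd y‖ := by
  let B : ι → ℝ →L[ℝ] ℝ →L[ℝ] ℝ := fun _ => ContinuousLinearMap.mul ℝ ℝ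
  have hB : ∀ s, ‖B s‖ ≤ (1 : NNReal) := fun _ => ContinuousLinearMap.opNorm_mul_le ℝ ℝ
  let x' := (lpPiLpₗᵢ (fun _ : ι => ℝ) ℝ).symm (toLp p x)
  let y' := (lpPiLpₗᵢ (fun _ : ι => ℝ) ℝ).symm (toLp pd y)
  calc x ⬝ᵥ y = lp.dualPairing p pd B hB x' y' := by
        rw [lp.dualPairing_apply, tsum_fintype]; rfl
    _ ≤ ‖lp.dualPairing p pd B hB x' y'‖ := Real.le_norm_self _
    _ ≤ 1 * ‖x'‖ * ‖y'‖ :=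
        (lp.dualPairing p pd B hB).le_of_opNorm₂_le_of_le (lp.norm_dualPairing B hB) le_rfl le_rfl
    _ = ‖toLp p x‖ * ‖toLp pd y‖ := by
        simp only [x', y', LinearIsometryEquiv.norm_map, one_mul]

theorem norm_sign_le_one (x : ℝ) : ‖(SignType.sign x : ℝ)‖ ≤ 1 := by
  rcases lt_trichotomy x 0 with h | rfl | h <;> simp [*]

theorem norm_toLp_top_le_of_forall_dotProduct_le (hC : 0 ≤ C)
    (h : ∀ d : ι → ℝ, ‖toLp 1 d‖ ≤ 1 → d ⬝ᵥ a ≤ C) : ‖toLp ∞ a‖ ≤ C := by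
  classical
  rw [PiLp.norm_toLp, pi_norm_le_iff_of_nonneg hC]
  intro s
  calc ‖a s‖ = Pi.single s (SignType.sign (a s) : ℝ) ⬝ᵥ a := by
        rw [single_dotProduct, sign_mul_self, Real.norm_eq_abs]
    _ ≤ C := h _ <| by
        rw [PiLp.toLp_single, PiLp.norm_single]
        exact norm_sign_le_one (a s)

theorem norm_toLp_one_le_of_forall_dotProduct_le
    (h : ∀ d : ι → ℝ, ‖toLp ∞ d‖ ≤ 1 → d ⬝ᵥ a ≤ C) : ‖toLp 1 a‖ ≤ C := by
  calc ‖toLp 1 a‖ = ∑ s, |a s| := PiLp.norm_eq_of_L1 _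
    _ = (fun s => (SignType.sign (a s) : ℝ)) ⬝ᵥ a :=
        Finset.sum_congr rfl fun s _ => (sign_mul_self (a s)).symm
    _ ≤ C := h _ <| by
        rw [PiLp.norm_toLp, pi_norm_le_iff_of_nonneg zero_le_one]
        exact fun s => norm_sign_le_one (a s)

theorem norm_toLp_le_of_forall_dotProduct_le_of_ne_top [p.HolderConjugate pd]
    (hp : p ≠ ∞) (hpd : pd ≠ ∞) (h : ∀ d : ι → ℝ, ‖toLp p d‖ ≤ 1 → d ⬝ᵥ a ≤ C) :
    ‖toLp pd a‖ ≤ C := by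
  have hconj := ENNReal.HolderConjugate.toReal_of_ne_top hp hpd
  obtain ⟨g, hg, hga : ∑ s, ‖a s‖₊ * g s = _⟩ :=
    (NNReal.isGreatest_Lp Finset.univ (fun s => ‖a s‖₊) hconj.symm).1
  let d : ι → ℝ := fun s => SignType.sign (a s) * g s
  have hd : ‖toLp p d‖ ≤ 1 := by
    rw [PiLp.norm_eq_sum hconj.pos]
    refine Real.rpow_le_one (by positivity) ?_ hconj.one_div_pos.le
    calc ∑ s, ‖d s‖ ^ p.toReal ≤ ∑ s, (g s : ℝ) ^ p.toReal := by
          gcongr with s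
          rw [norm_mul, NNReal.norm_eq]
          exact mul_le_of_le_one_left (g s).2 (norm_sign_le_one (a s))
      _ ≤ 1 := mod_cast hg
  calc ‖toLp pd a‖ = ∑ s, ‖a s‖ * g s := by
        rw [PiLp.norm_eq_sum hconj.symm.pos]
        simpa using congrArg ((↑) : NNReal → ℝ) hga.symm
    _ = d ⬝ᵥ a := Finset.sum_congr rfl fun s _ => by
        rw [mul_right_comm, sign_mul_self, Real.norm_eq_abs]
    _ ≤ C := h d hd

theorem norm_toLp_le_of_forall_dotProduct_le [p.HolderConjugate pd] (hC : 0 ≤ C)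
    (h : ∀ d : ι → ℝ, ‖toLp p d‖ ≤ 1 → d ⬝ᵥ a ≤ C) : ‖toLp pd a‖ ≤ C := by
  by_cases hp : p = ∞
  · obtain rfl := (ENNReal.HolderConjugate.eq_top_iff_eq_one p pd).1 hp
    subst hp
    exact norm_toLp_one_le_of_forall_dotProduct_le h
  by_cases hpd : pd = ∞
  · obtain rfl := (ENNReal.HolderConjugate.eq_top_iff_eq_one pd p).1 hpd
    subst hpd
    exact norm_toLp_top_le_of_forall_dotProduct_le hC h
  exact norm_toLp_le_of_forall_dotProduct_le_of_ne_top hp hpd h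

theorem exists_forall_apply_toLp_eq_dotProduct [Fact (1 ≤ p)] [p.HolderConjugate pd]
    (g : StrongDual ℝ (PiLp p fun _ : ι => ℝ)) :
    ∃ a : ι → ℝ, (∀ d, g (toLp p d) = d ⬝ᵥ a) ∧ ‖toLp pd a‖ ≤ ‖g‖ := by
  classical
  let a : ι → ℝ := fun s => g (PiLp.single p s 1)
  have hga (d : ι → ℝ) : g (toLp p d) = d ⬝ᵥ a := by
    have hd : toLp p d = ∑ s, d s • PiLp.single p s (1 : ℝ) := by
      ext i
      simp [Pi.single_apply]
    simp only [hd, map_sum, map_smul, smul_eq_mul, dotProduct, a]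
  refine ⟨a, hga, norm_toLp_le_of_forall_dotProduct_le (p := p) (norm_nonneg g) fun d hd => ?_⟩
  rw [← hga]
  exact (Real.le_norm_self _).trans (g.unit_le_opNorm _ hd)

end LpDuality

section Ambiguity

variable {ι : Type*} [Fintype ι] {p pd : ℝ≥0∞} {qhat : ι → ℝ} {θ : ℝ}

theorem dotProduct_const_of_sum_eq_one {q : ι → ℝ} (hq : ∑ s, q s = 1) (c : ℝ) :
    q ⬝ᵥ Function.const ι c = c := by
  simp only [dotProduct, Function.const_apply, ← Finset.sum_mul, hq, one_mul]

/-- The set `Q` of client weights: the probability vectors within `ℓ_p` distance `θ` of the nominal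
weights `qhat`. -/
def ambiguitySet (p : ℝ≥0∞) (qhat : ι → ℝ) (θ : ℝ) : Set (ι → ℝ) :=
  {q | (∀ s, 0 ≤ q s) ∧ ∑ s, q s = 1 ∧ ‖toLp p (q - qhat)‖ ≤ θ}

/-- The objective of the reformulated problem, an upper bound for the expectation of `z` under
every weight vector in `ambiguitySet p qhat θ`; `pd` stands for the exponent conjugate to `p`. -/
noncomputable def dualObjective (pd : ℝ≥0∞) (qhat : ι → ℝ) (θ : ℝ) (z : ι → ℝ) (γ : ℝ)
    (η : ι → ℝ) : ℝ :=
  qhat ⬝ᵥ (z + η) + θ * ‖toLp pd (z + Function.const ι γ + η)‖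

theorem dotProduct_le_dualObjective [Fact (1 ≤ p)] [Fact (1 ≤ pd)] [p.HolderConjugate pd]
    {q v z η : ι → ℝ} (hqhat : ∑ s, qhat s = 1) (hq : q ∈ ambiguitySet p qhat θ) (hvz : v ≤ z)
    (γ : ℝ) (hη : 0 ≤ η) : q ⬝ᵥ v ≤ dualObjective pd qhat θ z γ η := by
  obtain ⟨hq_nonneg, hq_sum, hq_dist⟩ := hq
  calc q ⬝ᵥ v ≤ q ⬝ᵥ (z + η) :=
        dotProduct_le_dotProduct_of_nonneg_left (le_add_of_le_of_nonneg hvz hη) hq_nonneg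
    _ = qhat ⬝ᵥ (z + η) + (q - qhat) ⬝ᵥ (z + Function.const ι γ + η) := by
        simp only [sub_dotProduct, dotProduct_add, dotProduct_const_of_sum_eq_one hq_sum,
          dotProduct_const_of_sum_eq_one hqhat]
        ring
    _ ≤ qhat ⬝ᵥ (z + η) + ‖toLp p (q - qhat)‖ * ‖toLp pd (z + Function.const ι γ + η)‖ := by
        gcongr
        exact dotProduct_le_norm_toLp_mul_norm_toLp _ _
    _ ≤ dualObjective pd qhat θ z γ η := by
        unfold dualObjective
        gcongr

theorem exists_slope_of_forall_dotProduct_le [Fact (1 ≤ p)] [p.HolderConjugate pd]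
    (hqhat : qhat ∈ stdSimplex ℝ ι) (hθ : 0 < θ) {u : ι → ℝ} {M : ℝ}
    (hM : ∀ q ∈ ambiguitySet p qhat θ, q ⬝ᵥ u ≤ M) :
    ∃ a : ι → ℝ, ∀ q ∈ stdSimplex ℝ ι, q ⬝ᵥ u + θ * ‖toLp pd a‖ ≤ M + (q - qhat) ⬝ᵥ a := by
  let toPi := (WithLp.linearEquiv p ℝ (ι → ℝ)).toLinearMap
  have hconc : ConcaveOn ℝ (toPi ⁻¹' stdSimplex ℝ ι) fun x => ofLp x ⬝ᵥ u :=
    (Fintype.linearCombination ℝ u ∘ₗ toPi).concaveOn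
      ((convex_stdSimplex ℝ ι).linear_preimage toPi)
  obtain ⟨g, hg⟩ := exists_strongDual_add_mul_norm_le hconc (x₀ := toLp p qhat) hqhat hθ
    fun x hx hball => hM (ofLp x) ⟨hx.1, hx.2, (mem_ball_iff_norm.1 hball).le⟩
  obtain ⟨a, hga, hnorm⟩ := exists_forall_apply_toLp_eq_dotProduct (pd := pd) g
  refine ⟨a, fun q hq => ?_⟩
  calc q ⬝ᵥ u + θ * ‖toLp pd a‖ ≤ q ⬝ᵥ u + θ * ‖g‖ := by gcongr
    _ ≤ M + g (toLp p (q - qhat)) := hg (toLp p q) hq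
    _ = M + (q - qhat) ⬝ᵥ a := by rw [hga]

theorem exists_dualObjective_le [Fact (1 ≤ p)] [p.HolderConjugate pd]
    (hqhat : qhat ∈ stdSimplex ℝ ι) (hθ : 0 < θ) {u : ι → ℝ} {M : ℝ}
    (hM : ∀ q ∈ ambiguitySet p qhat θ, q ⬝ᵥ u ≤ M) :
    ∃ (γ : ℝ) (η : ι → ℝ), 0 ≤ η ∧ dualObjective pd qhat θ u γ η ≤ M := by
  classical
  obtain ⟨a, ha⟩ := exists_slope_of_forall_dotProduct_le (pd := pd) hqhat hθ hM
  let γ : ℝ := qhat ⬝ᵥ a + θ * ‖toLp pd a‖ - M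
  let η : ι → ℝ := a - u - Function.const ι γ
  have hslope : u + Function.const ι γ + η = a := by simp only [η]; abel
  have hsum : u + η = a - Function.const ι γ := by simp only [η]; abel
  refine ⟨γ, η, fun s => ?_, le_of_eq ?_⟩
  · have hvertex := ha (Pi.single s 1) (single_mem_stdSimplex ℝ s)
    rw [sub_dotProduct, single_one_dotProduct, single_one_dotProduct] at hvertex
    simp only [Pi.zero_apply, Pi.sub_apply, Function.const_apply, η, γ]
    linarith
  · rw [dualObjective, hslope, hsum, dotProduct_sub, dotProduct_const_of_sum_eq_one hqhat.2]
    simp only [γ]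
    ring

theorem exists_dualObjective_le_of_isGLB [Fact (1 ≤ p)] [p.HolderConjugate pd]
    (hqhat : qhat ∈ stdSimplex ℝ ι) (hθ : 0 < θ) {C : ι → Set ℝ} {v : ι → ℝ}
    (hv : ∀ s, IsGLB (C s) (v s)) {M M' : ℝ} (hMM' : M < M')
    (hM : ∀ q ∈ ambiguitySet p qhat θ, q ⬝ᵥ v ≤ M) :
    ∃ (z : ι → ℝ) (γ : ℝ) (η : ι → ℝ),
      (∀ s, z s ∈ C s) ∧ 0 ≤ η ∧ dualObjective pd qhat θ z γ η ≤ M' := by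
  have hlt (s : ι) : v s < v s + (M' - M) := lt_add_of_pos_right _ (sub_pos.2 hMM')
  choose z hz _ hzv using fun s => (hv s).exists_between (hlt s)
  have hM' : ∀ q ∈ ambiguitySet p qhat θ, q ⬝ᵥ z ≤ M' := fun q hq => by
    calc q ⬝ᵥ z ≤ q ⬝ᵥ (v + Function.const ι (M' - M)) :=
          dotProduct_le_dotProduct_of_nonneg_left (fun s => (hzv s).le) hq.1
      _ = q ⬝ᵥ v + (M' - M) := by rw [dotProduct_add, dotProduct_const_of_sum_eq_one hq.2.1]
      _ ≤ M' := by linarith [hM q hq]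
  obtain ⟨γ, η, hη, hle⟩ := exists_dualObjective_le (pd := pd) hqhat hθ hM'
  exact ⟨z, γ, η, hz, hη, hle⟩

end Ambiguity

theorem drfl_tractable_reformulation_general {ι X : Type*} [Fintype ι] {L A : ι → Type*}
    {p pd : ℝ≥0∞} [Fact (1 ≤ p)] [Fact (1 ≤ pd)] [p.HolderConjugate pd]
    {qhat : ι → ℝ} (hqhat : qhat ∈ stdSimplex ℝ ι) {θ : ℝ} (hθ : 0 < θ) (W : Set X)
    (cost : ∀ s, L s → A s → ℝ) (Ω : ∀ s, Set (L s × A s × X)) (v : ι → X → ℝ)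
    (hv : ∀ s, ∀ w ∈ W,
      IsGLB {c : ℝ | ∃ lam alp, (lam, alp, w) ∈ Ω s ∧ c = cost s lam alp} (v s w)) :
    (⨅ w ∈ W, ⨆ q ∈ ambiguitySet p qhat θ, ((q ⬝ᵥ fun s => v s w : ℝ) : EReal)) =
    sInf {val : EReal | ∃ (w : X) (γ : ℝ) (η z : ι → ℝ) (lam : ∀ s, L s) (alp : ∀ s, A s),
      w ∈ W ∧ (∀ s, 0 ≤ η s) ∧ (∀ s, (lam s, alp s, w) ∈ Ω s) ∧
      (∀ s, z s = cost s (lam s) (alp s)) ∧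
      val = (dualObjective pd qhat θ z γ η : EReal)} := by
  refine le_antisymm (le_sInf ?_) (le_iInf₂ fun w hw => ?_)
  · rintro _ ⟨w, γ, η, z, lam, alp, hw, hη, hΩ, hz, rfl⟩
    refine (iInf₂_le w hw).trans (iSup₂_le fun q hq => EReal.coe_le_coe_iff.2 ?_)
    exact dotProduct_le_dualObjective hqhat.2 hq
      (fun s => (hv s w hw).1 ⟨lam s, alp s, hΩ s, hz s⟩) γ hη
  · refine EReal.le_of_forall_lt_iff_le.1 fun M' hM' => ?_
    obtain ⟨M, hM, hMM'⟩ := EReal.lt_iff_exists_real_btwn.1 hM'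
    obtain ⟨z, γ, η, hz, hη, hle⟩ := exists_dualObjective_le_of_isGLB (p := p) (pd := pd) hqhat hθ
      (fun s => hv s w hw) (EReal.coe_lt_coe_iff.1 hMM') fun q hq =>
        EReal.coe_le_coe_iff.1 (iSup₂_le_iff.1 hM.le q hq)
    choose lam alp hΩ hcost using hz
    refine le_trans (sInf_le ?_) (EReal.coe_le_coe_iff.2 hle)
    exact ⟨w, γ, η, z, lam, alp, hw, hη, hΩ, hcost, rfl⟩

/-- The tractable reformulation of the DRFL problem (Theorem 1 of the paper). -/
theorem drfl_tractable_reformulation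
    (S m : ℕ) (hS : 0 < S)
    (p pd : ℝ≥0∞) [Fact (1 ≤ p)] [Fact (1 ≤ pd)] (hp : 1 ≤ p) (hpq : 1 / p + 1 / pd = 1)
    (qhat : Fin S → ℝ) (hqhat₀ : ∀ s, 0 ≤ qhat s) (hqhat₁ : ∑ s, qhat s = 1)
    (θ : ℝ) (hθ : 0 < θ)
    (W : Set (Fin m → ℝ)) (hWne : W.Nonempty) (hWcl : IsClosed W) (hWcv : Convex ℝ W)
    (Nn : Fin S → ℕ) (hNn : ∀ s, 0 < Nn s)
    (ρ : Fin S → ℝ) (hρ : ∀ s, 0 ≤ ρ s)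
    (Ω : ∀ s : Fin S, Set (ℝ × (Fin (Nn s) → ℝ) × (Fin m → ℝ)))
    (hΩne : ∀ s, (Ω s).Nonempty) (hΩcl : ∀ s, IsClosed (Ω s)) (hΩcv : ∀ s, Convex ℝ (Ω s))
    (hΩpos : ∀ s, ∀ x ∈ Ω s, 0 ≤ x.1)
    (v : Fin S → (Fin m → ℝ) → ℝ)
    (hv : ∀ s, ∀ w ∈ W, IsGLB
      {c : ℝ | ∃ lam alp, (lam, alp, w) ∈ Ω s ∧
        c = ρ s * lam + ((Nn s : ℝ))⁻¹ * ∑ i, alp i} (v s w))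
    (hvlsc : ∀ s, LowerSemicontinuousOn (v s) W) :
    (⨅ w ∈ W, ⨆ qq ∈ {q : Fin S → ℝ |
        (∀ s, 0 ≤ q s) ∧ ∑ s, q s = 1 ∧ lpNorm p (q - qhat) ≤ θ},
      ((∑ s, qq s * v s w : ℝ) : EReal)) =
    sInf { val : EReal | ∃ (w : Fin m → ℝ) (γ : ℝ) (η z lam : Fin S → ℝ)
        (alp : ∀ s, Fin (Nn s) → ℝ),
        w ∈ W ∧ (∀ s, 0 ≤ η s) ∧
        (∀ s, (lam s, alp s, w) ∈ Ω s) ∧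
        (∀ s, z s = ρ s * lam s + ((Nn s : ℝ))⁻¹ * ∑ i, alp s i) ∧
        val = ((∑ s, qhat s * (z s + η s) +
          θ * lpNorm pd (fun s => z s + γ + η s) : ℝ) : EReal) } := by
  have : p.HolderConjugate pd := ⟨by simpa only [one_div, inv_one] using hpq⟩
  exact drfl_tractable_reformulation_general (p := p) (pd := pd) ⟨hqhat₀, hqhat₁⟩ hθ W
    (fun s lam alp => ρ s * lam + (Nn s : ℝ)⁻¹ * ∑ i, alp i) Ω v hv
end

section
/- Let S ∈ ℕ, z ∈ ℝ^S, q̂ ∈ Δ_S, θ > 0, and p ≥ 1 with conjugate exponent p_* (1/p + 1/p_* = 1). Then the optimal value of the problem max{zᵀq : q ∈ ℝ₊^S, eᵀq = 1, ‖q − q̂‖_p ≤ θ} equals the optimal value of the problem min{q̂ᵀ(z + γ·e + η) + βθ − γ : β ∈ ℝ₊, γ ∈ ℝ, η ∈ ℝ₊^S, ‖z + γ·e + η‖_{p_*} ≤ β}, and the maximum in the first problem is attained. -/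
open scoped ENNReal

/-! Let `φ` be concave on a convex set `K`, `x₀ ∈ K` and `v` an upper bound of `φ` on `K`
intersected with the open ball of radius `r` about `x₀`. Separating the hypograph of `φ` from the
product of the ball and the ray above `v` yields an affine function `f + μ` that majorizes `φ` on
`K` and stays below `v` on the ball. The separating hyperplane is not vertical because the centre
of the ball lies in `K`. Taking the supremum over the ball turns the second property into
`f x₀ + ‖f‖ * r + μ ≤ v`, while any affine majorant of `φ` bounds `φ` on the closed ball by
`f x₀ + ‖f‖ * r + μ`. So maximizing `φ` over `K` within distance `r` of `x₀` is dual to minimizing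
`f x₀ + ‖f‖ * r + μ`.

For `φ = z` linear and `K` the probability simplex, `f + μ` majorizes `z` on `K` exactly when
`η = f - z + μ` is nonnegative, which is the dual of the theorem with `γ = -μ`, once `‖f‖` is
identified with the conjugate `ℓ_p` norm of the coefficients of `f`. -/

open Metric

section Separation

variable {E : Type*} [TopologicalSpace E] [AddCommGroup E] [Module ℝ E] [IsTopologicalAddGroup E]
  [ContinuousSMul ℝ E]

theorem exists_affine_between_concaveOn_convexOn {K C : Set E} {φ ψ : E → ℝ}
    (hφ : ConcaveOn ℝ K φ) (hψ : ConvexOn ℝ C ψ) (hC : IsOpen C) (hψC : ContinuousOn ψ C)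
    (hKC : (K ∩ C).Nonempty) (hle : ∀ x ∈ K ∩ C, φ x ≤ ψ x) :
    ∃ (f : StrongDual ℝ E) (μ : ℝ), (∀ x ∈ K, φ x ≤ f x + μ) ∧ ∀ x ∈ C, f x + μ ≤ ψ x := by
  have hopen : IsOpen {w : E × ℝ | w.1 ∈ C ∧ ψ w.1 < w.2} := by
    have hcont : ContinuousOn (fun w : E × ℝ => w.2 - ψ w.1) (Prod.fst ⁻¹' C) :=
      continuousOn_snd.sub (hψC.comp continuousOn_fst fun _ hw => hw)
    convert! hcont.isOpen_inter_preimage (hC.preimage continuous_fst) (isOpen_Ioi (a := 0)) using 1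
    ext w
    simp
  have hdisj : Disjoint {w : E × ℝ | w.1 ∈ C ∧ ψ w.1 < w.2} {w | w.1 ∈ K ∧ w.2 ≤ φ w.1} :=
    Set.disjoint_left.2 fun w hw hw' => (hw'.2.trans (hle _ ⟨hw'.1, hw.1⟩)).not_gt hw.2
  obtain ⟨F, u, hFψ, hFφ⟩ :=
    geometric_hahn_banach_open hψ.convex_strict_epigraph hopen hφ.convex_hypograph hdisj
  have hF (x : E) (t : ℝ) : F (x, t) = F (x, 0) + t * F (0, 1) := by
    rw [← smul_eq_mul, ← map_smul, ← map_add]; simp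
  have habove (x : E) (hx : x ∈ C) (t : ℝ) (ht : ψ x < t) : F (x, 0) + t * F (0, 1) < u :=
    hF x t ▸ hFψ (x, t) ⟨hx, ht⟩
  have hbelow (x : E) (hx : x ∈ K) : u ≤ F (x, 0) + φ x * F (0, 1) :=
    hF x (φ x) ▸ hFφ (x, φ x) ⟨hx, le_rfl⟩
  have hneg : F (0, 1) < 0 := by
    obtain ⟨x, hxK, hxC⟩ := hKC
    have hgap : φ x < ψ x + 1 := (hle x ⟨hxK, hxC⟩).trans_lt (lt_add_one _)
    nlinarith [hbelow x hxK, habove x hxC (ψ x + 1) (lt_add_one _)]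
  have hvalue (x : E) : (-(F (0, 1))⁻¹ • F.comp (.inl ℝ E ℝ)) x + (F (0, 1))⁻¹ * u
      = (u - F (x, 0)) / F (0, 1) := by
    simp only [smul_apply, ContinuousLinearMap.comp_apply,
      ContinuousLinearMap.inl_apply, smul_eq_mul]
    ring
  refine ⟨-(F (0, 1))⁻¹ • F.comp (.inl ℝ E ℝ), (F (0, 1))⁻¹ * u, fun x hx => ?_, fun x hx => ?_⟩
  · rw [hvalue, le_div_iff_of_neg hneg]
    linarith [hbelow x hx]
  · refine le_of_forall_gt_imp_ge_of_dense fun t ht => ?_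
    rw [hvalue, div_le_iff_of_neg hneg]
    linarith [habove x hx t ht]

end Separation

section NormBall

variable {E : Type*} [NormedAddCommGroup E] [NormedSpace ℝ E] {x₀ x : E} {r u : ℝ}

theorem apply_le_add_norm_mul_of_mem_closedBall (f : StrongDual ℝ E) (hx : x ∈ closedBall x₀ r) :
    f x ≤ f x₀ + ‖f‖ * r := by
  have hbound : f (x - x₀) ≤ ‖f‖ * r :=
    (le_abs_self _).trans (f.le_opNorm_of_le (mem_closedBall_iff_norm.1 hx))
  rw [map_sub] at hbound
  linarith

theorem apply_add_norm_mul_le_of_forall_mem_ball (f : StrongDual ℝ E) (hr : 0 < r)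
    (hf : ∀ y ∈ ball x₀ r, f y ≤ u) : f x₀ + ‖f‖ * r ≤ u := by
  have hclosed (y : E) (hy : y ∈ closedBall x₀ r) : f y ≤ u :=
    le_on_closure hf f.continuous.continuousOn continuousOn_const (closure_ball x₀ hr.ne' ▸ hy)
  have hnorm : ‖f‖ ≤ (u - f x₀) / r := by
    refine f.opNorm_bound_of_ball_bound hr _ fun y hy => abs_le'.2 ?_
    rw [mem_closedBall_zero_iff] at hy
    have hpos := hclosed (x₀ + y) (by simpa using hy)
    have hneg := hclosed (x₀ - y) (by simpa using hy)
    rw [map_add] at hpos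
    rw [map_sub] at hneg
    constructor <;> linarith
  rw [le_div_iff₀ hr] at hnorm
  linarith

theorem exists_affine_majorant_of_forall_mem_inter_ball_le {K : Set E} {φ : E → ℝ}
    (hφ : ConcaveOn ℝ K φ) (hx₀ : x₀ ∈ K) (hr : 0 < r) (hu : ∀ y ∈ K ∩ ball x₀ r, φ y ≤ u) :
    ∃ (f : StrongDual ℝ E) (μ : ℝ), (∀ y ∈ K, φ y ≤ f y + μ) ∧ f x₀ + ‖f‖ * r + μ ≤ u := by
  obtain ⟨f, μ, hK, hball⟩ := exists_affine_between_concaveOn_convexOn hφ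
    (convexOn_const u (convex_ball x₀ r)) isOpen_ball continuousOn_const
    ⟨x₀, hx₀, mem_ball_self hr⟩ hu
  have hsup := apply_add_norm_mul_le_of_forall_mem_ball f hr fun y hy =>
    le_sub_iff_add_le.2 (hball y hy)
  exact ⟨f, μ, hK, le_sub_iff_add_le.1 hsup⟩

end NormBall

section LpDual

open WithLp

variable {ι : Type*} [Fintype ι] {p q : ℝ≥0∞}

theorem piLp_norm_le_norm_of_forall_norm_le {F : ι → Type*} [∀ i, NormedAddCommGroup (F i)]
    (hp : p ≠ 0) {x y : PiLp p F} (h : ∀ i, ‖x i‖ ≤ ‖y i‖) : ‖x‖ ≤ ‖y‖ := by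
  simpa only [← equiv_lpPiLp_norm, Equiv.apply_symm_apply] using
    lp.norm_mono hp (x := Equiv.lpPiLp.symm x) (y := Equiv.lpPiLp.symm y) h

variable (p) in
/-- The functional `x ↦ ∑ i, y i * x i` on `ℝ^ι` with the `ℓ_p` norm. It represents the dual of
`ℓ_p`, and its operator norm is the conjugate `ℓ_p` norm of `y`. -/
noncomputable def piLpDotProduct (y : ι → ℝ) : StrongDual ℝ (PiLp p fun _ : ι => ℝ) :=
  ∑ i, y i • PiLp.proj p (fun _ => ℝ) i

theorem piLpDotProduct_apply (y : ι → ℝ) (x : PiLp p fun _ : ι => ℝ) :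
    piLpDotProduct p y x = ∑ i, y i * x i := by
  simp [piLpDotProduct]

theorem piLpDotProduct_surjective :
    Function.Surjective (piLpDotProduct p : (ι → ℝ) → StrongDual ℝ (PiLp p fun _ : ι => ℝ)) := by
  classical
  refine fun f => ⟨fun i => f (PiLp.single p i 1), ?_⟩
  refine ContinuousLinearMap.coe_injective ((PiLp.basisFun p ℝ ι).ext fun i => ?_)
  simp [piLpDotProduct_apply, PiLp.single_apply]

variable [Fact (1 ≤ p)]

theorem sum_abs_mul_le_norm_piLpDotProduct_mul (y g : ι → ℝ) :
    ∑ i, |y i| * g i ≤ ‖piLpDotProduct p y‖ * ‖toLp p g‖ := by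
  let w : PiLp p fun _ : ι => ℝ := toLp p fun i => SignType.sign (y i) * g i
  have hw : ‖w‖ ≤ ‖toLp p g‖ := by
    refine piLp_norm_le_norm_of_forall_norm_le (zero_lt_one.trans_le Fact.out).ne' fun i => ?_
    have hsign : |(SignType.sign (y i) : ℝ)| ≤ 1 := by
      rcases lt_trichotomy (y i) 0 with hy | hy | hy <;> simp [hy]
    simpa [w, abs_mul] using mul_le_of_le_one_left (abs_nonneg (g i)) hsign
  calc ∑ i, |y i| * g i = piLpDotProduct p y w := by
        simp [piLpDotProduct_apply, w, ← mul_assoc, self_mul_sign]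
    _ ≤ ‖piLpDotProduct p y‖ * ‖toLp p g‖ :=
        (le_abs_self _).trans ((piLpDotProduct p y).le_opNorm_of_le hw)

theorem norm_toLp_one_le_norm_piLpDotProduct_top (y : ι → ℝ) :
    ‖toLp 1 y‖ ≤ ‖piLpDotProduct ∞ y‖ := by
  have hone : ‖toLp ∞ (1 : ι → ℝ)‖ ≤ 1 := by
    rw [PiLp.norm_eq_ciSup]
    exact Real.iSup_le (fun i => by simp) zero_le_one
  calc ‖toLp 1 y‖ = ∑ i, |y i| * (1 : ι → ℝ) i := by simp [PiLp.norm_eq_of_L1]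
    _ ≤ ‖piLpDotProduct ∞ y‖ * ‖toLp ∞ (1 : ι → ℝ)‖ := sum_abs_mul_le_norm_piLpDotProduct_mul y 1
    _ ≤ ‖piLpDotProduct ∞ y‖ := mul_le_of_le_one_right (norm_nonneg _) hone

theorem norm_toLp_top_le_norm_piLpDotProduct (y : ι → ℝ) :
    ‖toLp ∞ y‖ ≤ ‖piLpDotProduct p y‖ := by
  classical
  rw [PiLp.norm_eq_ciSup]
  refine Real.iSup_le (fun i => ?_) (norm_nonneg _)
  simpa [PiLp.norm_single, Pi.single_apply] using
    sum_abs_mul_le_norm_piLpDotProduct_mul (p := p) y (Pi.single i 1)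

variable [p.HolderConjugate q]

theorem norm_toLp_le_norm_piLpDotProduct_of_ne_top (hp : p ≠ ∞) (hq : q ≠ ∞) (y : ι → ℝ) :
    ‖toLp q y‖ ≤ ‖piLpDotProduct p y‖ := by
  have hpq := ENNReal.HolderConjugate.toReal_of_ne_top hp hq
  obtain ⟨g, hg, hyg⟩ := (NNReal.isGreatest_Lp Finset.univ (fun i => ‖y i‖₊) hpq.symm).1
  have hnorm : ‖toLp p fun i => (g i : ℝ)‖ ≤ 1 := by
    rw [PiLp.norm_eq_sum hpq.pos]
    refine Real.rpow_le_one (by positivity) ?_ (one_div_nonneg.2 hpq.nonneg)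
    simpa using mod_cast hg
  calc ‖toLp q y‖ = ∑ i, |y i| * g i := by
        rw [PiLp.norm_eq_sum hpq.symm.pos]
        simpa using (congrArg ((↑) : NNReal → ℝ) hyg).symm
    _ ≤ ‖piLpDotProduct p y‖ * ‖toLp p fun i => (g i : ℝ)‖ :=
        sum_abs_mul_le_norm_piLpDotProduct_mul y _
    _ ≤ ‖piLpDotProduct p y‖ := mul_le_of_le_one_right (norm_nonneg _) hnorm

variable [Fact (1 ≤ q)]

theorem norm_piLpDotProduct_le (y : ι → ℝ) : ‖piLpDotProduct p y‖ ≤ ‖toLp q y‖ := by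
  refine ContinuousLinearMap.opNorm_le_bound _ (norm_nonneg _) fun x => ?_
  let pairing := lp.dualPairing q p (fun _ : ι => ContinuousLinearMap.mul ℝ ℝ) (K := 1)
    fun _ => ContinuousLinearMap.opNorm_mul_le ℝ ℝ
  have hpairing : pairing (Equiv.lpPiLp.symm (toLp q y)) (Equiv.lpPiLp.symm x) =
      piLpDotProduct p y x :=
    (tsum_fintype _).trans (piLpDotProduct_apply y x).symm
  have hholder := pairing.le_of_opNorm₂_le_of_le (lp.norm_dualPairing _ _)
    (equiv_lpPiLp_norm (Equiv.lpPiLp.symm (toLp q y))).ge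
    (equiv_lpPiLp_norm (Equiv.lpPiLp.symm x)).ge
  simpa only [hpairing, Equiv.apply_symm_apply, NNReal.coe_one, one_mul] using hholder

theorem norm_piLpDotProduct (y : ι → ℝ) : ‖piLpDotProduct p y‖ = ‖toLp q y‖ := by
  refine (norm_piLpDotProduct_le y).antisymm ?_
  by_cases hq : q = ∞
  · subst hq
    exact norm_toLp_top_le_norm_piLpDotProduct y
  by_cases hp : p = ∞
  · obtain rfl : q = 1 := (ENNReal.HolderConjugate.eq_top_iff_eq_one p q).1 hp
    subst hp
    exact norm_toLp_one_le_norm_piLpDotProduct_top y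
  exact norm_toLp_le_norm_piLpDotProduct_of_ne_top hp hq y

end LpDual

section Simplex

open WithLp

variable {ι : Type*} [Fintype ι] {z q qhat : ι → ℝ} {θ : ℝ}

theorem sum_mul_le_sum_mul_add_of_mem_stdSimplex {y : ι → ℝ} {μ : ℝ} (hq : q ∈ stdSimplex ℝ ι)
    (hzy : ∀ i, z i ≤ y i + μ) : ∑ i, z i * q i ≤ ∑ i, y i * q i + μ :=
  calc ∑ i, z i * q i ≤ ∑ i, (y i + μ) * q i :=
        Finset.sum_le_sum fun i _ => mul_le_mul_of_nonneg_right (hzy i) (hq.1 i)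
    _ = ∑ i, y i * q i + μ := by
        simp only [add_mul, Finset.sum_add_distrib, ← Finset.mul_sum, hq.2, mul_one]

variable {p pd : ℝ≥0∞} [Fact (1 ≤ p)] [Fact (1 ≤ pd)] [p.HolderConjugate pd]

theorem sum_mul_le_dual_value {η : ι → ℝ} {β γ : ℝ} (hq : q ∈ stdSimplex ℝ ι)
    (hqθ : ‖toLp p (q - qhat)‖ ≤ θ) (hη : ∀ i, 0 ≤ η i)
    (hβ : ‖toLp pd fun i => z i + γ + η i‖ ≤ β) :
    ∑ i, z i * q i ≤ ∑ i, qhat i * (z i + γ + η i) + β * θ - γ := by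
  set y : ι → ℝ := fun i => z i + γ + η i
  have hsimplex : ∑ i, z i * q i ≤ ∑ i, y i * q i + -γ :=
    sum_mul_le_sum_mul_add_of_mem_stdSimplex hq fun i => by linarith [hη i]
  have hball := apply_le_add_norm_mul_of_mem_closedBall (piLpDotProduct p y)
    (mem_closedBall_iff_norm.2 hqθ : toLp p q ∈ closedBall (toLp p qhat) θ)
  have hnorm : ‖piLpDotProduct p y‖ * θ ≤ β * θ :=
    mul_le_mul_of_nonneg_right ((norm_piLpDotProduct y).trans_le hβ) ((norm_nonneg _).trans hqθ)
  simp only [piLpDotProduct_apply, mul_comm (y _) (qhat _)] at hball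
  linarith

theorem exists_dual_value_le {v : ℝ} (hθ : 0 < θ) (hqhat : qhat ∈ stdSimplex ℝ ι)
    (hv : ∀ q ∈ stdSimplex ℝ ι, ‖toLp p (q - qhat)‖ ≤ θ → ∑ i, z i * q i ≤ v) :
    ∃ (γ : ℝ) (η : ι → ℝ), (∀ i, 0 ≤ η i) ∧
      ∑ i, qhat i * (z i + γ + η i) + ‖toLp pd fun i => z i + γ + η i‖ * θ - γ ≤ v := by
  classical
  have hconvex : Convex ℝ {x : PiLp p fun _ : ι => ℝ | ofLp x ∈ stdSimplex ℝ ι} :=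
    (convex_stdSimplex ℝ ι).linear_preimage (WithLp.linearEquiv p ℝ (ι → ℝ)).toLinearMap
  obtain ⟨f, μ, hf, hfv⟩ := exists_affine_majorant_of_forall_mem_inter_ball_le
    (x₀ := toLp p qhat) ((piLpDotProduct p z).toLinearMap.concaveOn hconvex) hqhat hθ fun x hx =>
      (piLpDotProduct_apply z x).trans_le (hv _ hx.1 (mem_ball_iff_norm.1 hx.2).le)
  obtain ⟨y, rfl⟩ := piLpDotProduct_surjective f
  have hvertex (i : ι) : z i ≤ y i + μ := by
    simpa [piLpDotProduct_apply, Pi.single_apply] using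
      hf (toLp p (Pi.single i 1)) (single_mem_stdSimplex ℝ i)
  refine ⟨-μ, fun i => y i + μ - z i, fun i => sub_nonneg.2 (hvertex i), ?_⟩
  have hy (i : ι) : z i + -μ + (y i + μ - z i) = y i := by ring
  rw [piLpDotProduct_apply, norm_piLpDotProduct (q := pd)] at hfv
  simpa only [hy, mul_comm (qhat _), sub_neg_eq_add] using hfv

theorem exists_isMaxOn_stdSimplex_inter_norm_sub_le (z : ι → ℝ) (hθ : 0 ≤ θ)
    (hqhat : qhat ∈ stdSimplex ℝ ι) :
    ∃ q ∈ stdSimplex ℝ ι ∩ {q | ‖toLp p (q - qhat)‖ ≤ θ},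
      IsMaxOn (fun q => ∑ i, z i * q i) (stdSimplex ℝ ι ∩ {q | ‖toLp p (q - qhat)‖ ≤ θ}) q := by
  have hcompact : IsCompact (stdSimplex ℝ ι ∩ {q | ‖toLp p (q - qhat)‖ ≤ θ}) :=
    (isCompact_stdSimplex ℝ ι).inter_right (isClosed_le (by fun_prop) continuous_const)
  exact hcompact.exists_isMaxOn ⟨qhat, hqhat, by simpa using hθ⟩ (by fun_prop)

theorem weight_maximization_duality_general (z : ι → ℝ) (hqhat : qhat ∈ stdSimplex ℝ ι)
    (hθ : 0 < θ) :
    ∃ val : ℝ,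
      IsGreatest {r : ℝ | ∃ q : ι → ℝ, (∀ s, 0 ≤ q s) ∧ ∑ s, q s = 1 ∧
        ‖toLp p (q - qhat)‖ ≤ θ ∧ r = ∑ s, z s * q s} val ∧
      IsLeast {r : ℝ | ∃ (β γ : ℝ) (η : ι → ℝ), 0 ≤ β ∧ (∀ s, 0 ≤ η s) ∧
        ‖toLp pd fun s => z s + γ + η s‖ ≤ β ∧
        r = ∑ s, qhat s * (z s + γ + η s) + β * θ - γ} val := by
  obtain ⟨q, ⟨hq, hqθ⟩, hmax⟩ :=
    exists_isMaxOn_stdSimplex_inter_norm_sub_le (p := p) z hθ.le hqhat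
  refine ⟨∑ s, z s * q s, ⟨⟨q, hq.1, hq.2, hqθ, rfl⟩, ?_⟩, ?_, ?_⟩
  · rintro _ ⟨q', hq'₀, hq'₁, hq'θ, rfl⟩
    exact hmax ⟨⟨hq'₀, hq'₁⟩, hq'θ⟩
  · obtain ⟨γ, η, hη, hle⟩ :=
      exists_dual_value_le (pd := pd) hθ hqhat fun q' hq' hq'θ => hmax ⟨hq', hq'θ⟩
    exact ⟨_, γ, η, norm_nonneg _, hη, le_rfl,
      (sum_mul_le_dual_value hq hqθ hη le_rfl).antisymm hle⟩
  · rintro _ ⟨β, γ, η, -, hη, hβ, rfl⟩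
    exact sum_mul_le_dual_value hq hqθ hη hβ

end Simplex

/-- Duality for the maximization over weight vectors
(Proposition on the dual of `max_{q ∈ Q} zᵀq` in the paper). -/
theorem weight_maximization_duality
    (S : ℕ) (hS : 0 < S) (z qhat : Fin S → ℝ)
    (hqhat₀ : ∀ s, 0 ≤ qhat s) (hqhat₁ : ∑ s, qhat s = 1)
    (θ : ℝ) (hθ : 0 < θ)
    (p pd : ℝ≥0∞) [Fact (1 ≤ p)] [Fact (1 ≤ pd)] (hp : 1 ≤ p) (hpq : 1 / p + 1 / pd = 1) :
    ∃ val : ℝ,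
      IsGreatest {r : ℝ | ∃ q : Fin S → ℝ, (∀ s, 0 ≤ q s) ∧ ∑ s, q s = 1 ∧
        lpNorm p (q - qhat) ≤ θ ∧ r = ∑ s, z s * q s} val ∧
      val = sInf {r : ℝ | ∃ (β γ : ℝ) (η : Fin S → ℝ), 0 ≤ β ∧ (∀ s, 0 ≤ η s) ∧
        lpNorm pd (fun s => z s + γ + η s) ≤ β ∧
        r = ∑ s, qhat s * (z s + γ + η s) + β * θ - γ} := by
  have : p.HolderConjugate pd := ENNReal.holderConjugate_iff.2 (by simpa only [one_div] using hpq)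
  obtain ⟨val, hmax, hmin⟩ :=
    weight_maximization_duality_general (p := p) (pd := pd) z ⟨hqhat₀, hqhat₁⟩ hθ
  exact ⟨val, hmax, hmin.csInf_eq.symm⟩
end

section
/- Let ‖·‖ be a norm on ℝ^n, κ > 0, ε ≥ 0, and let N(x, y) = ‖x‖ + κ|y| denote the associated norm on ℝ^n × ℝ with dual norm N_*. Let Ξ = {(x, y) ∈ ℝ^n × ℝ : C₁x + c₂y ≤ d} with C₁ ∈ ℝ^{r×n}, c₂, d ∈ ℝ^r, and assume there is a Slater point (x_S, y_S) with C₁x_S + c₂y_S < d. Fix data (x̂_i, ŷ_i) ∈ Ξ for i = 1, …, N. Then for (λ, α, w) ∈ ℝ₊ × ℝ^N × ℝ^n the following are equivalent: (a) for every i, sup_{(x,y) ∈ Ξ} [max{0, |⟨w, x⟩ − y| − ε} − λ·(‖x − x̂_i‖ + κ|y − ŷ_i|)] ≤ α_i; (b) α ∈ ℝ₊^N and for every i there exist φ_i⁺, φ_i⁻ ∈ ℝ₊^r with: ŷ_i − ⟨w, x̂_i⟩ − ε + ⟨φ_i⁺, d − C₁x̂_i − c₂ŷ_i⟩ ≤ α_i;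 ⟨w, x̂_i⟩ − ŷ_i − ε + ⟨φ_i⁻, d − C₁x̂_i − c₂ŷ_i⟩ ≤ α_i; N_*(C₁ᵀφ_i⁺ + w, c₂ᵀφ_i⁺ − 1) ≤ λ; and N_*(C₁ᵀφ_i⁻ − w, c₂ᵀφ_i⁻ + 1) ≤ λ. -/
/-!
The `ε`-insensitive loss of the residual `⟨w, x⟩ - y` is the maximum of `0` and the two affine
functions `±(⟨w, x⟩ - y) - ε`. Hence (a) says that `0 ≤ αᵢ` (look at the data point itself) and
that each affine branch, minus `λ` times the distance to the data point, is at most `αᵢ` on `Ξ`.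
These are concave programs, for which Slater's condition provides exact Lagrange multipliers.
The Lagrangian is an affine function minus `λ` times the distance to the data point, so it is at
most `αᵢ` everywhere iff it is so at the data point and its slope has dual norm at most `λ`.
-/

open scoped Matrix NNReal

theorem nonpos_of_forall_nonneg_mul_le {a c : ℝ} (h : ∀ t, 0 ≤ t → t * a ≤ c) : a ≤ 0 := by
  by_contra! ha
  obtain ⟨n, hn⟩ := exists_lt_nsmul ha c
  exact (h n n.cast_nonneg).not_gt (by rwa [nsmul_eq_mul] at hn)

theorem forall_max_zero_abs_sub_sub_le_iff {X : Type*} {P : X → Prop} {v c : X → ℝ} {z₀ : X}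
    (hz₀ : P z₀) (hc : ∀ z, 0 ≤ c z) (hc_z₀ : c z₀ = 0) {ε a : ℝ} :
    (∀ z, P z → max 0 (|v z| - ε) - c z ≤ a) ↔
      0 ≤ a ∧ (∀ z, P z → -v z - c z ≤ a + ε) ∧ ∀ z, P z → v z - c z ≤ a + ε := by
  have branches_le_iff (z) : max 0 (|v z| - ε) - c z ≤ a ↔
      0 ≤ a + c z ∧ -v z - c z ≤ a + ε ∧ v z - c z ≤ a + ε := by
    rw [sub_le_iff_le_add, max_le_iff, sub_le_iff_le_add, abs_le']
    grind
  simp only [branches_le_iff]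
  constructor
  · exact fun h => ⟨by simpa [hc_z₀] using (h z₀ hz₀).1, fun z hz => (h z hz).2.1,
      fun z hz => (h z hz).2.2⟩
  · exact fun ⟨ha, hneg, hpos⟩ z hz => ⟨add_nonneg ha (hc z), hneg z hz, hpos z hz⟩

section LagrangeDuality

variable {E : Type*} [AddCommGroup E] [Module ℝ E] {s : Set E}

theorem exists_ne_zero_forall_dotProduct_nonneg_of_convexOn {J : Type*} [Fintype J]
    {h : E → J → ℝ} (hs : s.Nonempty) (hh : ConvexOn ℝ s h) (hpos : ∀ z ∈ s, ∃ j, 0 ≤ h z j) :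
    ∃ c : J → ℝ, 0 ≤ c ∧ c ≠ 0 ∧ ∀ z ∈ s, 0 ≤ c ⬝ᵥ h z := by
  classical
  -- Separate the open negative orthant from the upward closure of the image of `s` under `h`.
  let O : Set (J → ℝ) := Set.univ.pi fun _ => Set.Iio 0
  let U : Set (J → ℝ) := {u | ∃ z ∈ s, h z ≤ u}
  have hO_convex : Convex ℝ O := convex_pi fun _ _ => convex_Iio 0
  have hO_open : IsOpen O := isOpen_set_pi Set.finite_univ fun _ _ => isOpen_Iio
  have hU_convex : Convex ℝ U := by
    have hU : U = LinearMap.snd ℝ E (J → ℝ) '' {q | q.1 ∈ s ∧ h q.1 ≤ q.2} := by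
      ext u
      simp [U]
    exact hU ▸ hh.convex_epigraph.linear_image _
  have hOU : Disjoint O U := by
    refine Set.disjoint_left.2 fun u huO ⟨z, hz, hzu⟩ => ?_
    obtain ⟨j, hj⟩ := hpos z hz
    exact (hj.trans (hzu j)).not_gt (huO j trivial)
  obtain ⟨l, b, hlO, hlU⟩ := geometric_hahn_banach_open hO_convex hO_open hU_convex hOU
  obtain ⟨c, hc⟩ := (dotProductEquiv ℝ J).surjective l.toLinearMap
  have l_apply (u : J → ℝ) : l u = c ⬝ᵥ u := (LinearMap.congr_fun hc u).symm
  have hl_closure : ∀ u ≤ 0, l u ≤ b := fun u hu =>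
    closure_minimal (fun a ha => (hlO a ha).le) (isClosed_Iic.preimage l.continuous)
      (by simpa [O, closure_pi_set, Pi.le_def] using hu)
  have hb : 0 ≤ b := by simpa using hl_closure 0 le_rfl
  refine ⟨c, fun j => ?_, ?_, fun z hz => ?_⟩
  · refine neg_nonpos.1 (nonpos_of_forall_nonneg_mul_le (c := b) fun t ht => ?_)
    have := hl_closure (Pi.single j (-t)) (Pi.single_nonpos.2 (neg_nonpos.2 ht))
    rw [l_apply, dotProduct_single] at this
    linarith
  · rintro rfl
    obtain ⟨z, hz⟩ := hs
    have hl_lt : l (-1) < l (h z) :=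
      (hlO (-1) fun _ _ => neg_one_lt_zero (R := ℝ)).trans_le (hlU (h z) ⟨z, hz, le_rfl⟩)
    simp [l_apply] at hl_lt
  · exact hb.trans ((hlU (h z) ⟨z, hz, le_rfl⟩).trans_eq (l_apply _))

theorem exists_lagrange_multiplier_of_slater {ι : Type*} [Fintype ι] {f : E → ℝ} {g : ι → E → ℝ}
    (hf : ConcaveOn ℝ s f) (hg : ∀ k, ConvexOn ℝ s (g k)) (hslater : ∃ z ∈ s, ∀ k, g k z < 0)
    {β : ℝ} (hβ : ∀ z ∈ s, (∀ k, g k z ≤ 0) → f z ≤ β) :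
    ∃ φ : ι → ℝ, (∀ k, 0 ≤ φ k) ∧ ∀ z ∈ s, f z ≤ β + ∑ k, φ k * g k z := by
  obtain ⟨zS, hzS, hgS⟩ := hslater
  let h : E → Option ι → ℝ := fun z j => j.elim (β - f z) fun k => g k z
  have hh : ConvexOn ℝ s h := by
    refine ⟨hf.1, fun x hx y hy a b ha hb hab j => ?_⟩
    cases j with
    | none => exact ((convexOn_const β hf.1).sub hf).2 hx hy ha hb hab
    | some k => exact (hg k).2 hx hy ha hb hab
  have hpos (z) (hz : z ∈ s) : ∃ j, 0 ≤ h z j := by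
    by_contra! hneg
    have := hβ z hz fun k => (hneg (some k)).le
    have : β - f z < 0 := hneg none
    linarith
  obtain ⟨c, hc, hc_ne, hch⟩ :=
    exists_ne_zero_forall_dotProduct_nonneg_of_convexOn ⟨zS, hzS⟩ hh hpos
  have hch' (z) (hz : z ∈ s) : 0 ≤ c none * (β - f z) + ∑ k, c (some k) * g k z := by
    simpa [dotProduct, Fintype.sum_option, h] using hch z hz
  -- A vanishing objective weight would force all other weights to vanish at the Slater point.
  have hc_none : 0 < c none := by
    refine (hc none).lt_of_ne' fun h0 => hc_ne ?_
    have hterm (k) : c (some k) * g k zS ≤ 0 := mul_nonpos_of_nonneg_of_nonpos (hc _) (hgS k).le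
    have hsum : ∑ k, c (some k) * g k zS = 0 :=
      (Finset.sum_nonpos fun k _ => hterm k).antisymm (by simpa [h0] using hch' zS hzS)
    ext (_ | k)
    · exact h0
    · have := (Finset.sum_eq_zero_iff_of_nonpos fun k _ => hterm k).1 hsum k (Finset.mem_univ k)
      exact (mul_eq_zero.1 this).resolve_right (hgS k).ne
  refine ⟨fun k => c (some k) / c none, fun k => div_nonneg (hc _) hc_none.le, fun z hz => ?_⟩
  have hsum : ∑ k, c (some k) / c none * g k z = (∑ k, c (some k) * g k z) / c none := by
    simp only [Finset.sum_div, div_mul_eq_mul_div]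
  have := div_nonneg (hch' z hz) hc_none.le
  rw [add_div, mul_div_cancel_left₀ _ hc_none.ne', ← hsum] at this
  linarith

end LagrangeDuality

section SeminormPenalty

variable {E : Type*} [AddCommGroup E] [Module ℝ E] (p : Seminorm ℝ E) {lam : ℝ}

theorem isLUB_image_closedBall_le_iff {f : Module.Dual ℝ E} {b : ℝ}
    (hb : IsLUB (f '' p.closedBall 0 1) b) (hlam : 0 ≤ lam) :
    b ≤ lam ↔ ∀ u, f u ≤ lam * p u := by
  simp only [isLUB_le_iff hb, mem_upperBounds, Set.forall_mem_image, Seminorm.mem_closedBall_zero]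
  refine ⟨fun h u => ?_, fun h u hu => (h u).trans (mul_le_of_le_one_right hlam hu)⟩
  rcases (apply_nonneg p u).eq_or_lt' with hu | hu
  · rw [hu, mul_zero]
    refine nonpos_of_forall_nonneg_mul_le (c := lam) fun t _ => ?_
    simpa using h (x := t • u) (by simp [map_smul_eq_mul, hu])
  · have := h (x := (p u)⁻¹ • u) (by simp [map_smul_eq_mul, abs_of_pos hu, hu.ne'])
    rwa [map_smul, smul_eq_mul, inv_mul_le_iff₀ hu, mul_comm] at this

theorem concaveOn_dual_sub_mul_seminorm_sub (f : Module.Dual ℝ E) (z₀ : E) (hlam : 0 ≤ lam) :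
    ConcaveOn ℝ Set.univ fun z => f z - lam * p (z - z₀) := by
  have hp : ConvexOn ℝ Set.univ fun z => p (z - z₀) := by
    simpa [Function.comp_def, sub_eq_add_neg] using p.convexOn.translate_left (-z₀)
  exact (f.concaveOn convex_univ).sub (hp.smul hlam)

theorem forall_le_dual_add_mul_seminorm_sub_iff {f : Module.Dual ℝ E} {z₀ : E} {c : ℝ} :
    (∀ z, c ≤ f z + lam * p (z - z₀)) ↔ c ≤ f z₀ ∧ ∀ u, f u ≤ lam * p u := by
  constructor
  · refine fun h => ⟨by simpa using h z₀, fun u => sub_nonpos.1 ?_⟩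
    refine nonpos_of_forall_nonneg_mul_le (c := f z₀ - c) fun t ht => ?_
    have := h (z₀ - t • u)
    rw [sub_sub_cancel_left, map_neg_eq_map, map_smul_eq_mul, Real.norm_of_nonneg ht, map_sub,
      map_smul, smul_eq_mul] at this
    linarith
  · rintro ⟨h₀, h⟩ z
    have := h (z₀ - z)
    rw [map_sub, map_sub_rev] at this
    linarith

variable {ι : Type*} [Fintype ι] (C : ι → Module.Dual ℝ E) (d : ι → ℝ)

theorem forall_dual_sub_mul_seminorm_sub_le_on_polyhedron_iff
    (hslater : ∃ z, ∀ k, C k z < d k) (f : Module.Dual ℝ E) (z₀ : E) (hlam : 0 ≤ lam) {β : ℝ} :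
    (∀ z, (∀ k, C k z ≤ d k) → f z - lam * p (z - z₀) ≤ β) ↔
      ∃ φ : ι → ℝ, (∀ k, 0 ≤ φ k) ∧ f z₀ + ∑ k, φ k * (d k - C k z₀) ≤ β ∧
        ∀ u, (∑ k, φ k • C k - f) u ≤ lam * p u := by
  have lagrangian_le_iff (φ : ι → ℝ) :
      (∀ z, f z - lam * p (z - z₀) ≤ β + ∑ k, φ k * (C k z - d k)) ↔
        f z₀ + ∑ k, φ k * (d k - C k z₀) ≤ β ∧ ∀ u, (∑ k, φ k • C k - f) u ≤ lam * p u := by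
    have key := forall_le_dual_add_mul_seminorm_sub_iff p (lam := lam) (f := ∑ k, φ k • C k - f)
      (z₀ := z₀) (c := ∑ k, φ k * d k - β)
    simp only [LinearMap.sub_apply, LinearMap.sum_apply, LinearMap.smul_apply, smul_eq_mul, mul_sub,
      Finset.sum_sub_distrib] at key ⊢
    convert key using 2 <;> grind
  constructor
  · intro h
    obtain ⟨φ, hφ, hφ_le⟩ := exists_lagrange_multiplier_of_slater
      (concaveOn_dual_sub_mul_seminorm_sub p f z₀ hlam)
      (fun k => ((C k).convexOn convex_univ).sub (concaveOn_const (d k) convex_univ))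
      (by simpa using hslater) (β := β) (by simpa using h)
    exact ⟨φ, hφ, (lagrangian_le_iff φ).1 fun z => hφ_le z trivial⟩
  · rintro ⟨φ, hφ, hφ_le⟩ z hz
    have hsum : ∑ k, φ k * (C k z - d k) ≤ 0 :=
      Finset.sum_nonpos fun k _ => mul_nonpos_of_nonneg_of_nonpos (hφ k) (sub_nonpos.2 (hz k))
    linarith [(lagrangian_le_iff φ).2 hφ_le z]

theorem drfl_svr_omega_general {I : Type*} (hslater : ∃ z, ∀ k, C k z < d k) {zhat : I → E}
    (hdata : ∀ i k, C k (zhat i) ≤ d k) (hlam : 0 ≤ lam) (ε : ℝ) (α : I → ℝ)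
    (v : Module.Dual ℝ E) :
    (∀ i z, (∀ k, C k z ≤ d k) → max 0 (|v z| - ε) - lam * p (z - zhat i) ≤ α i) ↔
      (∀ i, 0 ≤ α i) ∧ ∀ i, ∃ φp φm : ι → ℝ, (∀ k, 0 ≤ φp k) ∧ (∀ k, 0 ≤ φm k) ∧
        -v (zhat i) - ε + ∑ k, φp k * (d k - C k (zhat i)) ≤ α i ∧
        v (zhat i) - ε + ∑ k, φm k * (d k - C k (zhat i)) ≤ α i ∧
        (∀ u, (∑ k, φp k • C k + v) u ≤ lam * p u) ∧
        ∀ u, (∑ k, φm k • C k - v) u ≤ lam * p u := by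
  rw [← forall_and]
  refine forall_congr' fun i => ?_
  have hneg := forall_dual_sub_mul_seminorm_sub_le_on_polyhedron_iff p C d hslater (-v) (zhat i)
    hlam (β := α i + ε)
  have hpos := forall_dual_sub_mul_seminorm_sub_le_on_polyhedron_iff p C d hslater v (zhat i)
    hlam (β := α i + ε)
  simp only [sub_neg_eq_add, LinearMap.neg_apply] at hneg
  rw [forall_max_zero_abs_sub_sub_le_iff (hdata i)
    (fun z => mul_nonneg hlam (apply_nonneg p (z - zhat i))) (by simp), hneg, hpos]
  simp only [sub_add_eq_add_sub, sub_le_iff_le_add]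
  constructor
  · rintro ⟨hα, ⟨φp, hp, hp_le, hp_dual⟩, φm, hm, hm_le, hm_dual⟩
    exact ⟨hα, φp, φm, hp, hm, hp_le, hm_le, hp_dual, hm_dual⟩
  · rintro ⟨hα, φp, φm, hp, hm, hp_le, hm_le, hp_dual, hm_dual⟩
    exact ⟨hα, ⟨φp, hp, hp_le, hp_dual⟩, φm, hm, hm_le, hm_dual⟩

end SeminormPenalty

/-- The seminorm `(x, y) ↦ p x + κ|y|` on `E × ℝ`, whose distance is the regression transport cost
`d_R`. The weight is an `ℝ≥0` because these are the scalars acting on seminorms. -/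
noncomputable def regressionSeminorm {E : Type*} [AddCommGroup E] [Module ℝ E] (p : Seminorm ℝ E)
    (κ : ℝ≥0) : Seminorm ℝ (E × ℝ) :=
  p.comp (.fst ℝ E ℝ) + κ • (normSeminorm ℝ ℝ).comp (.snd ℝ E ℝ)

section Coordinates

variable {n : Type*} [Fintype n]

/-- The standard inner product on `ℝⁿ × ℝ`, as a linear map in each argument: it turns the
coefficient vectors `(C₁ₖ, c₂ₖ)` and `(w, -1)` into linear functionals. -/
def prodDotProduct : (n → ℝ) × ℝ →ₗ[ℝ] Module.Dual ℝ ((n → ℝ) × ℝ) :=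
  (dotProductBilin ℝ ℝ).compl₁₂ (.fst ℝ _ ℝ) (.fst ℝ _ ℝ) +
    (LinearMap.mul ℝ ℝ).compl₁₂ (.snd ℝ _ ℝ) (.snd ℝ _ ℝ)

theorem prodDotProduct_apply (a u : (n → ℝ) × ℝ) :
    prodDotProduct a u = (∑ j, a.1 j * u.1 j) + a.2 * u.2 := rfl

theorem sum_smul_prodDotProduct {ι : Type*} [Fintype ι] (φ : ι → ℝ) (A : ι → n → ℝ) (b : ι → ℝ) :
    ∑ k, φ k • prodDotProduct (A k, b k) =
      prodDotProduct (fun j => ∑ k, A k j * φ k, ∑ k, b k * φ k) := by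
  simp only [← map_smul, ← map_sum]
  congr 1
  ext j <;> simp [Prod.fst_sum, Prod.snd_sum, mul_comm]

end Coordinates

/-- Corollary (SVR) of the paper: characterization of `(λ, α, w) ∈ Ω_s` for distributionally
robust support vector regression with the `ε`-insensitive loss, polyhedral support set
`Ξ = {(x, y) : C₁x + c₂y ≤ d}` admitting a Slater point, and regression transport cost
`d_R((x,y),(x',y')) = ‖x − x'‖ + κ|y − y'|`. Here `nn` is a norm on `ℝ^n` and `dN` is the
dual norm of the norm `N(x, y) = nn x + κ|y|` on `ℝ^n × ℝ`. -/
theorem drfl_svr_omega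
    (n N r : ℕ) (κ ε : ℝ) (hκ : 0 < κ) (hε : 0 ≤ ε)
    (nn : (Fin n → ℝ) → ℝ)
    (hnn_nonneg : ∀ x, 0 ≤ nn x)
    (hnn_def : ∀ x, nn x = 0 ↔ x = 0)
    (hnn_add : ∀ x y, nn (x + y) ≤ nn x + nn y)
    (hnn_smul : ∀ (c : ℝ) x, nn (c • x) = |c| * nn x)
    (dN : ((Fin n → ℝ) × ℝ) → ℝ)
    (hdN : ∀ v : (Fin n → ℝ) × ℝ, IsLUB
      {ρ : ℝ | ∃ u : (Fin n → ℝ) × ℝ, nn u.1 + κ * |u.2| ≤ 1 ∧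
        ρ = (∑ j, v.1 j * u.1 j) + v.2 * u.2} (dN v))
    (C₁ : Fin r → Fin n → ℝ) (c₂ d : Fin r → ℝ)
    (xS : Fin n → ℝ) (yS : ℝ)
    (hSlater : ∀ k, (∑ j, C₁ k j * xS j) + c₂ k * yS < d k)
    (xhat : Fin N → Fin n → ℝ) (yhat : Fin N → ℝ)
    (hdata : ∀ i k, (∑ j, C₁ k j * xhat i j) + c₂ k * yhat i ≤ d k)
    (lam : ℝ) (hlam : 0 ≤ lam) (α : Fin N → ℝ) (w : Fin n → ℝ) :
    (∀ i, ∀ (x : Fin n → ℝ) (y : ℝ),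
        (∀ k, (∑ j, C₁ k j * x j) + c₂ k * y ≤ d k) →
        max 0 (|(∑ j, w j * x j) - y| - ε)
          - lam * (nn (x - xhat i) + κ * |y - yhat i|) ≤ α i)
    ↔
    ((∀ i, 0 ≤ α i) ∧ ∀ i, ∃ φp φm : Fin r → ℝ,
      (∀ k, 0 ≤ φp k) ∧ (∀ k, 0 ≤ φm k) ∧
      yhat i - (∑ j, w j * xhat i j) - ε +
        (∑ k, φp k * (d k - (∑ j, C₁ k j * xhat i j) - c₂ k * yhat i)) ≤ α i ∧
      (∑ j, w j * xhat i j) - yhat i - ε +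
        (∑ k, φm k * (d k - (∑ j, C₁ k j * xhat i j) - c₂ k * yhat i)) ≤ α i ∧
      dN (fun j => (∑ k, C₁ k j * φp k) + w j, (∑ k, c₂ k * φp k) - 1) ≤ lam ∧
      dN (fun j => (∑ k, C₁ k j * φm k) - w j, (∑ k, c₂ k * φm k) + 1) ≤ lam) := by
  let p := regressionSeminorm (Seminorm.of nn hnn_add hnn_smul) ⟨κ, hκ.le⟩
  have p_apply (u) : p u = nn u.1 + κ * |u.2| := rfl
  have dN_le_iff (v : (Fin n → ℝ) × ℝ) : dN v ≤ lam ↔ ∀ u, prodDotProduct v u ≤ lam * p u := by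
    refine isLUB_image_closedBall_le_iff p ?_ hlam
    convert hdN v using 1
    ext ρ
    simp only [Set.mem_image, Seminorm.mem_closedBall_zero, p_apply, prodDotProduct_apply,
      Set.mem_ofPred_eq, eq_comm (b := ρ)]
  have key := drfl_svr_omega_general p (fun k => prodDotProduct (C₁ k, c₂ k)) d
    ⟨(xS, yS), hSlater⟩ (zhat := fun i => (xhat i, yhat i)) hdata hlam ε α (prodDotProduct (w, -1))
  simp only [sum_smul_prodDotProduct, ← map_add, ← map_sub, ← dN_le_iff] at key
  simpa only [Prod.forall, Prod.mk_add_mk, Prod.mk_sub_mk, Pi.add_def, Pi.sub_def, p_apply,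
    prodDotProduct_apply, neg_one_mul, ← sub_eq_add_neg, sub_neg_eq_add, neg_sub, ← sub_sub]
    using key
end

section
/- Let ‖·‖ be a norm on ℝ^n with dual norm ‖·‖_*, and let κ > 0. Let X = {x ∈ ℝ^n : Cx ≤ d} with C ∈ ℝ^{r×n}, d ∈ ℝ^r, and assume there is a Slater point x_S with Cx_S < d. Fix data x̂_i ∈ X and labels ŷ_i ∈ {−1, +1} for i = 1, …, N. Then for (λ, α, w) ∈ ℝ₊ × ℝ^N × ℝ^n the following are equivalent: (a) for every i, sup over x ∈ X and y ∈ {−1, +1} of [max{0, 1 − y·⟨w, x⟩} − λ·(‖x − x̂_i‖ + κ·𝟙{y ≠ ŷ_i})] ≤ α_i; (b) α ∈ ℝ₊^N and for every i there exist φ_i⁺, φ_i⁻ ∈ ℝ₊^r with: 1 − ŷ_i·⟨w, x̂_i⟩ + ⟨φ_i⁺, d − Cx̂_i⟩ ≤ α_i; 1 + ŷ_i·⟨w, x̂_i⟩ + ⟨φ_i⁻, d − Cx̂_i⟩ − κλ ≤ α_i; ‖Cᵀφ_i⁺ + ŷ_i·w‖_* ≤ λ; and ‖Cᵀφ_i⁻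 − ŷ_i·w‖_* ≤ λ. -/
/-!
For each of the two labels, the robust constraint says that an affine function minus the cone
`lam * p (x - x₀)` stays below a threshold on the polyhedron `{x | ∀ k, A k x ≤ b k}`. By Slater's
condition and Lagrange duality this holds iff, for some multipliers `φ ≥ 0`, the Lagrangian, an
affine function plus `lam * p (x - x₀)`, is nonnegative on the whole space. Such a function is
nonnegative iff it is so at the apex `x₀` and its linear part lies in the dual ball of radius `lam`:
these are the two scalar constraints attached to each label. The zero branch of the hinge loss
only adds `0 ≤ α`, which is read off at `x = x₀`.
-/

section Lagrange

theorem nonneg_of_forall_pos_nonneg_add_mul {𝕜 : Type*} [Field 𝕜] [LinearOrder 𝕜]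
    [IsStrictOrderedRing 𝕜] {a b : 𝕜} (h : ∀ t > 0, 0 ≤ b + t * a) : 0 ≤ a := by
  by_contra! ha
  have ht : 0 < (|b| + 1) / -a := div_pos (by positivity) (neg_pos.2 ha)
  have hmul : (|b| + 1) / -a * a = -(|b| + 1) := by
    rw [div_neg, neg_mul, div_mul_cancel₀ _ ha.ne]
  linarith [h _ ht, le_abs_self b]

theorem nonneg_of_forall_neg_dotProduct_lt {ι : Type*} [Fintype ι] {μ : ι → ℝ} {u : ℝ}
    (h : ∀ z : ι → ℝ, (∀ j, z j < 0) → μ ⬝ᵥ z < u) : 0 ≤ μ ∧ 0 ≤ u := by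
  classical
  have h_closure : ∀ z ≤ 0, μ ⬝ᵥ z ≤ u := by
    intro z hz
    have hz_mem : z ∈ closure (Set.univ.pi fun _ : ι ↦ Set.Iio (0 : ℝ)) := by
      rw [closure_pi_set]
      exact fun j _ ↦ by simpa using hz j
    have h_closed : IsClosed {y : ι → ℝ | μ ⬝ᵥ y ≤ u} := isClosed_le (by fun_prop) continuous_const
    refine closure_minimal (fun y hy ↦ ?_) h_closed hz_mem
    exact (h y fun j ↦ hy j trivial).le
  refine ⟨fun j ↦ nonneg_of_forall_pos_nonneg_add_mul (b := u) fun t ht ↦ ?_, ?_⟩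
  · have hj : μ ⬝ᵥ Pi.single j (-t) ≤ u := h_closure _ (by simp [ht.le])
    rw [dotProduct_single] at hj
    linarith
  · simpa using h_closure 0 le_rfl

variable {E ι : Type*} [AddCommGroup E] [Module ℝ E] {s : Set E}

theorem convex_setOf_exists_forall_le {f : ι → E → ℝ} (hf : ∀ j, ConvexOn ℝ s (f j))
    (hs : Convex ℝ s) : Convex ℝ {z : ι → ℝ | ∃ x ∈ s, ∀ j, f j x ≤ z j} := by
  rintro z ⟨x, hx, hxz⟩ z' ⟨x', hx', hxz'⟩ a b ha hb hab
  refine ⟨a • x + b • x', hs hx hx' ha hb hab, fun j ↦ ?_⟩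
  calc f j (a • x + b • x') ≤ a • f j x + b • f j x' := (hf j).2 hx hx' ha hb hab
    _ ≤ a • z j + b • z' j := by gcongr <;> simp [hxz, hxz']

theorem exists_pos_forall_nonneg_sum_mul [Fintype ι] {f : ι → E → ℝ} (hf : ∀ j, ConvexOn ℝ s (f j))
    (hs : s.Nonempty) (hneg : ∀ x ∈ s, ∃ j, 0 ≤ f j x) :
    ∃ μ : ι → ℝ, 0 < μ ∧ ∀ x ∈ s, 0 ≤ ∑ j, μ j * f j x := by
  classical
  obtain ⟨x₀, hx₀⟩ := hs
  obtain ⟨j₀, -⟩ := hneg x₀ hx₀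
  -- Closing the image of `f` upwards makes it convex, hence separable from the negative orthant.
  have h_disj : Disjoint (Set.univ.pi fun _ : ι ↦ Set.Iio (0 : ℝ))
      {z : ι → ℝ | ∃ x ∈ s, ∀ j, f j x ≤ z j} := by
    refine Set.disjoint_left.2 ?_
    rintro z hz ⟨x, hx, hxz⟩
    obtain ⟨j, hj⟩ := hneg x hx
    exact (hj.trans (hxz j)).not_gt (hz j trivial)
  obtain ⟨ℓ, u, h_orthant, h_image⟩ := geometric_hahn_banach_open
    (convex_pi fun _ _ ↦ convex_Iio 0) (isOpen_set_pi Set.finite_univ fun _ _ ↦ isOpen_Iio)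
    (convex_setOf_exists_forall_le hf (hf j₀).1) h_disj
  obtain ⟨μ, hμ⟩ := (dotProductEquiv ℝ ι).surjective ℓ.toLinearMap
  have hℓ : ∀ z, ℓ z = μ ⬝ᵥ z := fun z ↦ (LinearMap.congr_fun hμ z).symm
  simp only [hℓ] at h_orthant h_image
  obtain ⟨hμ_nonneg, hu⟩ :=
    nonneg_of_forall_neg_dotProduct_lt fun z hz ↦ h_orthant z fun j _ ↦ hz j
  have h_sum : ∀ x ∈ s, u ≤ ∑ j, μ j * f j x := fun x hx ↦
    h_image (fun j ↦ f j x) ⟨x, hx, fun _ ↦ le_rfl⟩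
  refine ⟨μ, hμ_nonneg.lt_of_ne ?_, fun x hx ↦ hu.trans (h_sum x hx)⟩
  rintro rfl
  have hu_pos : 0 < u := by simpa using h_orthant (fun _ ↦ -1) fun _ _ ↦ by simp
  exact hu_pos.not_ge (by simpa using h_sum x₀ hx₀)

theorem forall_nonneg_iff_exists_lagrange_multipliers [Fintype ι] {g : E → ℝ} {h : ι → E → ℝ}
    (hg : ConvexOn ℝ s g) (hh : ∀ k, ConvexOn ℝ s (h k)) (h_slater : ∃ x ∈ s, ∀ k, h k x < 0) :
    (∀ x ∈ s, (∀ k, h k x ≤ 0) → 0 ≤ g x) ↔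
      ∃ φ : ι → ℝ, 0 ≤ φ ∧ ∀ x ∈ s, 0 ≤ g x + ∑ k, φ k * h k x := by
  refine ⟨fun H ↦ ?_, fun ⟨φ, hφ, H⟩ x hx hxh ↦ ?_⟩
  · obtain ⟨xS, hxS, hxS_neg⟩ := h_slater
    obtain ⟨μ, hμ, hL⟩ := exists_pos_forall_nonneg_sum_mul (f := fun j : Option ι ↦ j.elim g h)
      (Option.rec hg hh) ⟨xS, hxS⟩ fun x hx ↦ by
        by_contra! hneg
        exact (H x hx fun k ↦ (hneg (some k)).le).not_gt (hneg none)
    simp only [Fintype.sum_option, Option.elim_none, Option.elim_some] at hL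
    have hμ_none : 0 < μ none := by
      refine (hμ.le none).lt_of_ne fun h_zero ↦ hμ.ne ?_
      have h_term : ∀ k, μ (some k) * h k xS ≤ 0 := fun k ↦
        mul_nonpos_of_nonneg_of_nonpos (hμ.le _) (hxS_neg k).le
      have h_sum : ∑ k, μ (some k) * h k xS = 0 :=
        (Finset.sum_nonpos fun k _ ↦ h_term k).antisymm (by simpa [← h_zero] using hL xS hxS)
      ext (_ | k)
      · exact h_zero
      · have hk : μ (some k) * h k xS = 0 :=
          (Finset.sum_eq_zero_iff_of_nonpos fun k _ ↦ h_term k).1 h_sum k (Finset.mem_univ k)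
        exact ((mul_eq_zero_iff_right (hxS_neg k).ne).1 hk).symm
    refine ⟨fun k ↦ μ (some k) / μ none, fun k ↦ div_nonneg (hμ.le _) hμ_none.le, fun x hx ↦ ?_⟩
    calc 0 ≤ (μ none * g x + ∑ k, μ (some k) * h k x) / μ none :=
          div_nonneg (hL x hx) hμ_none.le
      _ = g x + ∑ k, μ (some k) / μ none * h k x := by
          rw [add_div, mul_div_cancel_left₀ _ hμ_none.ne', Finset.sum_div]
          simp only [mul_div_right_comm]
  · have h_penalty : ∑ k, φ k * h k x ≤ 0 :=
      Finset.sum_nonpos fun k _ ↦ mul_nonpos_of_nonneg_of_nonpos (hφ k) (hxh k)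
    linarith [H x hx]

end Lagrange

section DualBall

variable {E : Type*} [AddCommGroup E] [Module ℝ E] {p : Seminorm ℝ E} {c : ℝ}

/-- The ball of radius `c` for the dual norm `ℓ ↦ sup {ℓ u | p u ≤ 1}` of a seminorm. Bounding `ℓ`
on the unit ball of `p` avoids a real supremum, which would be `0` for an unbounded functional. -/
def dualBall (p : Seminorm ℝ E) (c : ℝ) : Set (Module.Dual ℝ E) :=
  {ℓ | ∀ u, p u ≤ 1 → ℓ u ≤ c}

theorem mem_dualBall_iff_forall_le_mul (hc : 0 ≤ c) {ℓ : Module.Dual ℝ E} :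
    ℓ ∈ dualBall p c ↔ ∀ u, ℓ u ≤ c * p u := by
  refine ⟨fun hℓ u ↦ ?_, fun hℓ u hu ↦ (hℓ u).trans (mul_le_of_le_one_right hc hu)⟩
  have h_scale : ∀ t > 0, t * p u ≤ 1 → t * ℓ u ≤ c := fun t ht htu ↦ by
    simpa using hℓ (t • u) (by rwa [map_smul_eq_mul, Real.norm_of_nonneg ht.le])
  obtain hu | hu := (apply_nonneg p u).eq_or_lt
  · have h_neg : 0 ≤ -ℓ u := nonneg_of_forall_pos_nonneg_add_mul (b := c) fun t ht ↦ by
      linarith [h_scale t ht (by simp [← hu])]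
    simpa [← hu] using h_neg
  · rw [mul_comm c, ← inv_mul_le_iff₀ hu]
    exact h_scale (p u)⁻¹ (inv_pos.2 hu) (inv_mul_cancel₀ hu.ne').le

theorem forall_nonneg_affine_add_seminorm_iff (hc : 0 ≤ c) (m : Module.Dual ℝ E) (a : ℝ) (x₀ : E) :
    (∀ x, 0 ≤ m x + a + c * p (x - x₀)) ↔ 0 ≤ m x₀ + a ∧ m ∈ dualBall p c := by
  rw [mem_dualBall_iff_forall_le_mul hc]
  refine ⟨fun H ↦ ⟨by simpa using H x₀, fun u ↦ ?_⟩, fun ⟨h_apex, hm⟩ x ↦ ?_⟩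
  · refine sub_nonneg.1 (nonneg_of_forall_pos_nonneg_add_mul (b := m x₀ + a) fun t ht ↦ ?_)
    have h_ray := H (x₀ - t • u)
    rw [sub_sub_cancel_left, map_neg_eq_map, map_smul_eq_mul, Real.norm_of_nonneg ht.le, map_sub,
      map_smul, smul_eq_mul] at h_ray
    linarith
  · have h_bound := hm (x₀ - x)
    rw [map_sub, map_sub_rev] at h_bound
    linarith [h_apex]

end DualBall

section Polyhedron

variable {E ι : Type*} [AddCommGroup E] [Module ℝ E] {p : Seminorm ℝ E}
  {A : ι → Module.Dual ℝ E} {b : ι → ℝ} {c : ℝ}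

/-- The feature support set `{x | A x ≤ b}`, with the rows of `A` given as linear functionals. -/
def polyhedron (A : ι → Module.Dual ℝ E) (b : ι → ℝ) : Set E :=
  {x | ∀ k, A k x ≤ b k}

theorem convexOn_affine_add_seminorm (hc : 0 ≤ c) (q : Module.Dual ℝ E) (a : ℝ) (x₀ : E) :
    ConvexOn ℝ Set.univ fun x ↦ q x + a + c * p (x - x₀) := by
  have h_seminorm : ConvexOn ℝ Set.univ fun x ↦ p (x - x₀) := by
    simpa [Function.comp_def, sub_eq_add_neg] using p.convexOn.translate_left (-x₀)
  exact ((q.convexOn convex_univ).add_const a).add (h_seminorm.smul hc)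

theorem forall_polyhedron_affine_sub_seminorm_le_iff [Fintype ι] (h_slater : ∃ x, ∀ k, A k x < b k)
    (hc : 0 ≤ c) (q : Module.Dual ℝ E) (a β : ℝ) (x₀ : E) :
    (∀ x ∈ polyhedron A b, a - q x - c * p (x - x₀) ≤ β) ↔
      ∃ φ : ι → ℝ, 0 ≤ φ ∧ a - q x₀ + ∑ k, φ k * (b k - A k x₀) ≤ β ∧
        ∑ k, φ k • A k + q ∈ dualBall p c := by
  have h_duality := forall_nonneg_iff_exists_lagrange_multipliers
    (convexOn_affine_add_seminorm (p := p) hc q (β - a) x₀)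
    (fun k ↦ ((A k).convexOn convex_univ).add_const (-b k))
    (by simpa only [Set.mem_univ, true_and, Pi.add_apply, ← sub_eq_add_neg, sub_neg] using h_slater)
  have h_lagrangian : ∀ (φ : ι → ℝ) (x : E),
      q x + (β - a) + c * p (x - x₀) + ∑ k, φ k * (A k x - b k) =
        (∑ k, φ k • A k + q) x + (β - a - ∑ k, φ k * b k) + c * p (x - x₀) := by
    intro φ x
    simp only [LinearMap.add_apply, LinearMap.coe_sum, Finset.sum_apply, LinearMap.smul_apply,
      smul_eq_mul, mul_sub, Finset.sum_sub_distrib]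
    ring
  have h_objective : ∀ x, 0 ≤ q x + (β - a) + c * p (x - x₀) ↔ a - q x - c * p (x - x₀) ≤ β :=
    fun x ↦ by constructor <;> intro h <;> linarith
  have h_apex : ∀ φ : ι → ℝ, 0 ≤ (∑ k, φ k • A k + q) x₀ + (β - a - ∑ k, φ k * b k) ↔
      a - q x₀ + ∑ k, φ k * (b k - A k x₀) ≤ β := by
    intro φ
    simp only [LinearMap.add_apply, LinearMap.coe_sum, Finset.sum_apply, LinearMap.smul_apply,
      smul_eq_mul, mul_sub, Finset.sum_sub_distrib]
    constructor <;> intro h <;> linarith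
  simpa only [Set.mem_univ, forall_const, Pi.add_apply, ← sub_eq_add_neg, sub_nonpos, h_lagrangian,
    forall_nonneg_affine_add_seminorm_iff hc, h_objective, h_apex, polyhedron, Set.mem_ofPred_eq]
    using h_duality

end Polyhedron

section RobustHinge

variable {E : Type*} [AddCommGroup E] [Module ℝ E] {p : Seminorm ℝ E} {κ lam α η : ℝ}
  {X : Set E} {x₀ : E} {w : Module.Dual ℝ E}

/-- The hinge loss `L` of the margin `z = y * ⟨w, x⟩`. -/
def hingeLoss (z : ℝ) : ℝ :=
  max 0 (1 - z)

/-- The transport cost `d_C` between labelled points: the distance `p` between the features, plus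
`κ` for a change of label. -/
noncomputable def classificationCost (p : Seminorm ℝ E) (κ : ℝ) (z z' : E × ℝ) : ℝ :=
  p (z.1 - z'.1) + κ * if z.2 = z'.2 then 0 else 1

theorem classificationCost_nonneg (hκ : 0 ≤ κ) (z z' : E × ℝ) :
    0 ≤ classificationCost p κ z z' := by
  unfold classificationCost
  positivity

theorem classificationCost_same_label (x x' : E) (y : ℝ) :
    classificationCost p κ (x, y) (x', y) = p (x - x') := by
  simp [classificationCost]

theorem classificationCost_of_ne_label {y y' : ℝ} (h : y ≠ y') (x x' : E) :
    classificationCost p κ (x, y) (x', y') = p (x - x') + κ := by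
  simp [classificationCost, h]

theorem hingeLoss_sub_le_iff {z t : ℝ} (ht : 0 ≤ t) (hα : 0 ≤ α) :
    hingeLoss z - t ≤ α ↔ 1 - z - t ≤ α := by
  rw [hingeLoss, sub_le_iff_le_add, sub_le_iff_le_add, max_le_iff, and_iff_right (by positivity)]

theorem forall_mem_one_neg_one_iff {R : Type*} [One R] [InvolutiveNeg R] {P : R → Prop} {η : R}
    (hη : η ∈ ({1, -1} : Set R)) : (∀ y ∈ ({1, -1} : Set R), P y) ↔ P η ∧ P (-η) := by
  obtain rfl | rfl := hη <;> simp [and_comm]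

theorem nonneg_of_forall_hingeLoss_sub_cost_le (hx₀ : x₀ ∈ X) (hη : η ∈ ({1, -1} : Set ℝ))
    (h : ∀ x ∈ X, ∀ y ∈ ({1, -1} : Set ℝ),
      hingeLoss (y * w x) - lam * classificationCost p κ (x, y) (x₀, η) ≤ α) : 0 ≤ α := by
  have h_loss : hingeLoss (η * w x₀) ≤ α := by
    simpa [classificationCost_same_label] using h x₀ hx₀ η hη
  exact (le_max_left _ _).trans h_loss

theorem forall_hingeLoss_sub_cost_le_iff_of_nonneg (hκ : 0 ≤ κ) (hlam : 0 ≤ lam) (hα : 0 ≤ α)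
    (hη : η ∈ ({1, -1} : Set ℝ)) :
    (∀ x ∈ X, ∀ y ∈ ({1, -1} : Set ℝ),
      hingeLoss (y * w x) - lam * classificationCost p κ (x, y) (x₀, η) ≤ α) ↔
    (∀ x ∈ X, 1 - (η • w) x - lam * p (x - x₀) ≤ α) ∧
      ∀ x ∈ X, 1 - (-(η • w)) x - lam * p (x - x₀) ≤ α + κ * lam := by
  have h_hinge : ∀ x y, hingeLoss (y * w x) - lam * classificationCost p κ (x, y) (x₀, η) ≤ α ↔
      1 - y * w x - lam * classificationCost p κ (x, y) (x₀, η) ≤ α := fun x y ↦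
    hingeLoss_sub_le_iff (mul_nonneg hlam (classificationCost_nonneg hκ _ _)) hα
  have h_ne : -η ≠ η := by
    obtain rfl | rfl := hη <;> norm_num
  simp only [h_hinge, forall_mem_one_neg_one_iff hη, forall_and, classificationCost_same_label,
    classificationCost_of_ne_label h_ne]
  simp only [LinearMap.neg_apply, LinearMap.smul_apply, smul_eq_mul, neg_mul, mul_add, ← sub_sub,
    mul_comm lam κ, sub_le_iff_le_add (c := κ * lam)]

end RobustHinge

theorem drfl_svm_omega_general {E ι σ : Type*} [AddCommGroup E] [Module ℝ E] [Fintype ι]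
    (p : Seminorm ℝ E) {A : ι → Module.Dual ℝ E} {b : ι → ℝ} (h_slater : ∃ x, ∀ k, A k x < b k)
    {κ lam : ℝ} (hκ : 0 ≤ κ) (hlam : 0 ≤ lam)
    {xhat : σ → E} (hxhat : ∀ i, xhat i ∈ polyhedron A b)
    {yhat : σ → ℝ} (hyhat : ∀ i, yhat i ∈ ({1, -1} : Set ℝ))
    (α : σ → ℝ) (w : Module.Dual ℝ E) :
    (∀ i, ∀ x ∈ polyhedron A b, ∀ y ∈ ({1, -1} : Set ℝ),
      hingeLoss (y * w x) - lam * classificationCost p κ (x, y) (xhat i, yhat i) ≤ α i) ↔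
    (∀ i, 0 ≤ α i) ∧ ∀ i, ∃ φp φm : ι → ℝ, 0 ≤ φp ∧ 0 ≤ φm ∧
      1 - yhat i * w (xhat i) + ∑ k, φp k * (b k - A k (xhat i)) ≤ α i ∧
      1 + yhat i * w (xhat i) + ∑ k, φm k * (b k - A k (xhat i)) - κ * lam ≤ α i ∧
      ∑ k, φp k • A k + yhat i • w ∈ dualBall p lam ∧
      ∑ k, φm k • A k - yhat i • w ∈ dualBall p lam := by
  rw [← forall_and]
  refine forall_congr' fun i ↦ ?_
  trans 0 ≤ α i ∧ (∀ x ∈ polyhedron A b, 1 - (yhat i • w) x - lam * p (x - xhat i) ≤ α i) ∧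
      ∀ x ∈ polyhedron A b, 1 - (-(yhat i • w)) x - lam * p (x - xhat i) ≤ α i + κ * lam
  · rw [← and_iff_right_of_imp (nonneg_of_forall_hingeLoss_sub_cost_le (hxhat i) (hyhat i))]
    exact and_congr_right fun hα ↦
      forall_hingeLoss_sub_cost_le_iff_of_nonneg hκ hlam hα (hyhat i)
  · simp only [forall_polyhedron_affine_sub_seminorm_le_iff h_slater hlam, exists_and_exists_comm]
    refine and_congr_right fun _ ↦ exists₂_congr fun φp φm ↦ ?_
    simp only [LinearMap.neg_apply, LinearMap.smul_apply, smul_eq_mul, sub_neg_eq_add,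
      ← sub_eq_add_neg, ← sub_le_iff_le_add (c := κ * lam)]
    tauto

theorem dualNorm_le_iff_mem_dualBall {n : Type*} [Fintype n] [DecidableEq n]
    {p : Seminorm ℝ (n → ℝ)} {v : n → ℝ} {a : ℝ}
    (h : IsLUB {ρ : ℝ | ∃ u, p u ≤ 1 ∧ ρ = ∑ j, v j * u j} a) (c : ℝ) :
    a ≤ c ↔ dotProductEquiv ℝ n v ∈ dualBall p c := by
  rw [isLUB_le_iff h]
  exact ⟨fun hc u hu ↦ hc ⟨u, hu, rfl⟩, by rintro hv _ ⟨u, hu, rfl⟩; exact hv u hu⟩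

theorem dualNorm_sum_mul_add_le_iff {n ι : Type*} [Fintype n] [DecidableEq n] [Fintype ι]
    {p : Seminorm ℝ (n → ℝ)} {dn : (n → ℝ) → ℝ}
    (hdn : ∀ v, IsLUB {ρ : ℝ | ∃ u, p u ≤ 1 ∧ ρ = ∑ j, v j * u j} (dn v))
    (C : ι → n → ℝ) (φ : ι → ℝ) (v : n → ℝ) (c : ℝ) :
    dn (fun j ↦ ∑ k, C k j * φ k + v j) ≤ c ↔
      ∑ k, φ k • dotProductEquiv ℝ n (C k) + dotProductEquiv ℝ n v ∈ dualBall p c := by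
  have h_vector : (fun j ↦ ∑ k, C k j * φ k + v j) = ∑ k, φ k • C k + v := by
    ext j
    simp [mul_comm]
  simp only [h_vector, ← map_smul, ← map_sum, ← map_add]
  exact dualNorm_le_iff_mem_dualBall (hdn _) c

/-- Corollary (SVM) of the paper: characterization of `(λ, α, w) ∈ Ω_s` for distributionally
robust SVM with hinge loss, polyhedral feature support set `X = {x : Cx ≤ d}` admitting a
Slater point, and classification transport cost
`d_C((x,y),(x',y')) = ‖x − x'‖ + κ·𝟙{y ≠ y'}` on `ℝ^n × {−1, +1}`. Here `nn` is a norm on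
`ℝ^n` and `dn` is its dual norm. -/
theorem drfl_svm_omega
    (n N r : ℕ) (κ : ℝ) (hκ : 0 < κ)
    (nn : (Fin n → ℝ) → ℝ)
    (hnn_nonneg : ∀ x, 0 ≤ nn x)
    (hnn_def : ∀ x, nn x = 0 ↔ x = 0)
    (hnn_add : ∀ x y, nn (x + y) ≤ nn x + nn y)
    (hnn_smul : ∀ (c : ℝ) x, nn (c • x) = |c| * nn x)
    (dn : (Fin n → ℝ) → ℝ)
    (hdn : ∀ v, IsLUB {ρ : ℝ | ∃ u, nn u ≤ 1 ∧ ρ = ∑ j, v j * u j} (dn v))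
    (C : Fin r → Fin n → ℝ) (d : Fin r → ℝ)
    (xS : Fin n → ℝ) (hSlater : ∀ k, (∑ j, C k j * xS j) < d k)
    (xhat : Fin N → Fin n → ℝ) (hdata : ∀ i k, (∑ j, C k j * xhat i j) ≤ d k)
    (yhat : Fin N → ℝ) (hyhat : ∀ i, yhat i = 1 ∨ yhat i = -1)
    (lam : ℝ) (hlam : 0 ≤ lam) (α : Fin N → ℝ) (w : Fin n → ℝ) :
    (∀ i, ∀ x : Fin n → ℝ, (∀ k, (∑ j, C k j * x j) ≤ d k) →
        ∀ y : ℝ, (y = 1 ∨ y = -1) →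
        max 0 (1 - y * ∑ j, w j * x j)
          - lam * (nn (x - xhat i) + κ * (if y = yhat i then 0 else 1)) ≤ α i)
    ↔
    ((∀ i, 0 ≤ α i) ∧ ∀ i, ∃ φp φm : Fin r → ℝ,
      (∀ k, 0 ≤ φp k) ∧ (∀ k, 0 ≤ φm k) ∧
      1 - yhat i * (∑ j, w j * xhat i j) +
        (∑ k, φp k * (d k - ∑ j, C k j * xhat i j)) ≤ α i ∧
      1 + yhat i * (∑ j, w j * xhat i j) +
        (∑ k, φm k * (d k - ∑ j, C k j * xhat i j)) - κ * lam ≤ α i ∧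
      dn (fun j => (∑ k, C k j * φp k) + yhat i * w j) ≤ lam ∧
      dn (fun j => (∑ k, C k j * φm k) - yhat i * w j) ≤ lam) := by
  have h_add := fun φ i ↦ dualNorm_sum_mul_add_le_iff
    (p := Seminorm.of nn hnn_add hnn_smul) hdn C φ (yhat i • w) lam
  have h_sub := fun φ i ↦ dualNorm_sum_mul_add_le_iff
    (p := Seminorm.of nn hnn_add hnn_smul) hdn C φ (-(yhat i • w)) lam
  simp only [map_neg, map_smul, ← sub_eq_add_neg, Pi.neg_apply, Pi.smul_apply, smul_eq_mul]
    at h_add h_sub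
  simp only [h_add, h_sub]
  exact drfl_svm_omega_general (Seminorm.of nn hnn_add hnn_smul)
    (A := fun k ↦ dotProductEquiv ℝ (Fin n) (C k)) ⟨xS, hSlater⟩ hκ.le hlam hdata hyhat α
    (dotProductEquiv ℝ (Fin n) w)
end

section
/- Let ‖·‖ be a norm on ℝ^n with dual norm ‖·‖_*, let κ > 0, and let X = {x ∈ ℝ^n : −e ≤ x ≤ e}, where e is the all-ones vector. Fix data x̂_i ∈ X and labels ŷ_i ∈ {−1, +1} for i = 1, …, N. Then for (λ, α, w) ∈ ℝ₊ × ℝ^N × ℝ^n the following are equivalent: (a) for every i, sup over x ∈ X and y ∈ {−1, +1} of [max{0, 1 − y·⟨w, x⟩} − λ·(‖x − x̂_i‖ + κ·𝟙{y ≠ ŷ_i})] ≤ α_i; (b) α ∈ ℝ₊^N and for every i there exist π_i⁺, π_i⁻, τ_i⁺, τ_i⁻ ∈ ℝ₊^n with: 1 + ⟨−ŷ_i·w − π_i⁺ + τ_i⁺, x̂_i⟩ + ⟨π_i⁺ + τ_i⁺, e⟩ ≤ α_i; 1 + ⟨ŷ_i·w − π_i⁻ + τ_i⁻, x̂_i⟩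 + ⟨π_i⁻ + τ_i⁻, e⟩ − κλ ≤ α_i; ‖π_i⁺ − τ_i⁺ + ŷ_i·w‖_* ≤ λ; and ‖π_i⁻ − τ_i⁻ − ŷ_i·w‖_* ≤ λ. -/
/-!
For a fixed label the inner supremum is that of a linear function on the box, penalised by a
multiple of the norm of `x - a`. By the Mazur–Orlicz sandwich theorem, a bound on it holds iff the
penalty can be replaced by some linear functional in the dual ball. What remains is a linear
function on the box; its maximum is attained at a vertex picked by the signs of the coefficients,
whose positive and negative parts are the multipliers `π` and `τ`. The hinge loss and the choice
of label only split the original bound into three: `0 ≤ α i`, and one for each label.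
-/

section Sandwich

variable {E : Type*} [AddCommGroup E] [Module ℝ E]

/-- The pointed cone `C - ℝ≥0 • s`. A linear functional is nonnegative on it exactly when it is
nonnegative on `C` and nonpositive on `s`, so that a positive extension along this cone separates
`C` from `s`. -/
def coneSubRays (C : PointedCone ℝ E) {s : Set E} (hs : Convex ℝ s) (hne : s.Nonempty) :
    PointedCone ℝ E where
  carrier := {z | ∃ t : ℝ, 0 ≤ t ∧ ∃ y ∈ s, z + t • y ∈ C}
  zero_mem' := ⟨0, le_rfl, hne.some, hne.some_mem, by simp⟩
  add_mem' := by
    rintro z z' ⟨t, ht, y, hy, hz⟩ ⟨t', ht', y', hy', hz'⟩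
    obtain ⟨y'', hy'', hsum⟩ := hs.exists_mem_add_smul_eq hy hy' ht ht'
    refine ⟨t + t', add_nonneg ht ht', y'', hy'', ?_⟩
    rw [hsum, add_add_add_comm]
    exact C.add_mem hz hz'
  smul_mem' := by
    rintro c z ⟨t, ht, y, hy, hz⟩
    refine ⟨c * t, mul_nonneg c.2 ht, y, hy, ?_⟩
    have hcz := C.smul_mem c.2 hz
    rwa [smul_add, smul_smul] at hcz

/-- The epigraph of a sublinear function, as a pointed cone; homogeneity includes the scalar `0`,
which makes the function vanish at `0`. -/
def sublinearEpigraph (N : E → ℝ) (N_smul : ∀ c : ℝ, 0 ≤ c → ∀ x, N (c • x) = c * N x)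
    (N_add : ∀ x y, N (x + y) ≤ N x + N y) : PointedCone ℝ (E × ℝ) where
  carrier := {z | N z.1 ≤ z.2}
  zero_mem' := by simpa using (N_smul 0 le_rfl 0).le
  add_mem' := fun hz hz' ↦ (N_add _ _).trans (add_le_add hz hz')
  smul_mem' := fun c _ hz ↦ (N_smul c c.2 _).trans_le (mul_le_mul_of_nonneg_left hz c.2)

theorem exists_dual_between_concaveOn_sublinear {N : E → ℝ}
    (N_smul : ∀ c : ℝ, 0 ≤ c → ∀ x, N (c • x) = c * N x)
    (N_add : ∀ x y, N (x + y) ≤ N x + N y)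
    {K : Set E} (hK : K.Nonempty) {g : E → ℝ} (hg : ConcaveOn ℝ K g) (hgN : ∀ x ∈ K, g x ≤ N x) :
    ∃ ℓ : Module.Dual ℝ E, (∀ x, ℓ x ≤ N x) ∧ ∀ x ∈ K, g x ≤ ℓ x := by
  obtain ⟨x₀, hx₀⟩ := hK
  let C := coneSubRays (sublinearEpigraph N N_smul N_add) hg.convex_hypograph
    ⟨(x₀, g x₀), hx₀, le_rfl⟩
  have epigraph_mem : ∀ u r, N u ≤ r → (u, r) ∈ C := fun u r hur ↦
    ⟨0, le_rfl, (x₀, g x₀), ⟨hx₀, le_rfl⟩, by rwa [zero_smul, add_zero]⟩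
  have neg_graph_mem : ∀ x ∈ K, -(x, g x) ∈ C := fun x hx ↦
    ⟨1, zero_le_one, (x, g x), ⟨hx, le_rfl⟩, by
      rw [one_smul, neg_add_cancel]
      exact zero_mem _⟩
  have nonneg_of_mem : ∀ r, ((0 : E), r) ∈ C → 0 ≤ r := by
    rintro r ⟨t, ht, ⟨x, s⟩, ⟨hx, hs⟩, hle : N (0 + t • x) ≤ r + t * s⟩
    rw [zero_add, N_smul t ht] at hle
    linarith [mul_le_mul_of_nonneg_left (hs.trans (hgN x hx)) ht]
  obtain ⟨φ, hφ, hφC⟩ := riesz_extension C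
    ((LinearMap.snd ℝ E ℝ).toPMap (Submodule.prod ⊥ ⊤))
    (by rintro ⟨⟨u, r⟩, hu, _⟩ hr
        obtain rfl : u = 0 := hu
        exact nonneg_of_mem r hr)
    (by rintro ⟨u, r⟩
        exact ⟨⟨(0, N u - r), rfl, trivial⟩, epigraph_mem _ _ (by simp)⟩)
  have φ_apply : ∀ u r, φ (u, r) = φ (u, 0) + r := fun u r ↦ by
    have h0 : φ (0, r) = r := hφ ⟨(0, r), rfl, trivial⟩
    rw [← h0, ← map_add, h0, Prod.mk_add_mk, add_zero, zero_add]
  refine ⟨-φ ∘ₗ LinearMap.inl ℝ E ℝ, fun x ↦ ?_, fun x hx ↦ ?_⟩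
  · have hφx := hφC _ (epigraph_mem x (N x) le_rfl)
    rw [φ_apply] at hφx
    exact neg_le_iff_add_nonneg'.2 hφx
  · have hφx := hφC _ (neg_graph_mem x hx)
    rw [map_neg, φ_apply] at hφx
    change g x ≤ -φ (x, 0)
    linarith

end Sandwich

section Duality

variable {E : Type*} [AddCommGroup E] [Module ℝ E]

theorem forall_sub_seminorm_le_iff_exists_dual (p : Seminorm ℝ E) {r : ℝ} (hr : 0 ≤ r)
    {K : Set E} (hK : K.Nonempty) {g : E → ℝ} (hg : ConcaveOn ℝ K g) (a : E) (c : ℝ) :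
    (∀ x ∈ K, g x - r * p (x - a) ≤ c) ↔
      ∃ ℓ : Module.Dual ℝ E, (∀ u, ℓ u ≤ r * p u) ∧ ∀ x ∈ K, g x + ℓ (x - a) ≤ c := by
  constructor
  · intro h
    have hconc : ConcaveOn ℝ ((a + ·) ⁻¹' K) fun u ↦ g (a + u) - c :=
      (hg.translate_right a).sub (convexOn_const c (hg.1.translate_preimage_right a))
    have hgp : ∀ u ∈ (a + ·) ⁻¹' K, g (a + u) - c ≤ r * p u := fun u hu ↦ by
      have hau := h (a + u) hu
      rw [add_sub_cancel_left] at hau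
      linarith
    obtain ⟨ℓ, hℓp, hgℓ⟩ := exists_dual_between_concaveOn_sublinear (N := fun u ↦ r * p u)
      (fun t ht u ↦ by rw [map_smul_eq_mul, Real.norm_of_nonneg ht, mul_left_comm])
      (fun u u' ↦ by
        rw [← mul_add]
        exact mul_le_mul_of_nonneg_left (map_add_le_add p u u') hr)
      (hK.preimage (Equiv.addLeft a).surjective) hconc hgp
    refine ⟨-ℓ, fun u ↦ by simpa using hℓp (-u), fun x hx ↦ ?_⟩
    have hgx := hgℓ (x - a) (by simpa using hx)
    rw [add_sub_cancel] at hgx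
    rw [LinearMap.neg_apply]
    linarith
  · rintro ⟨ℓ, hℓp, hgℓ⟩ x hx
    have hneg := hℓp (a - x)
    rw [← neg_sub x a, map_neg, map_neg_eq_map] at hneg
    linarith [hgℓ x hx]

theorem isLUB_unitBall_le_iff (p : Seminorm ℝ E) {ℓ : Module.Dual ℝ E} {d : ℝ}
    (hd : IsLUB {ρ | ∃ u, p u ≤ 1 ∧ ρ = ℓ u} d) {r : ℝ} (hr : 0 ≤ r) :
    d ≤ r ↔ ∀ u, ℓ u ≤ r * p u := by
  rw [isLUB_le_iff hd]
  constructor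
  · refine fun h u ↦ le_mul_of_forall_lt₀ fun r' hr' b hb ↦ ?_
    have hb0 : 0 < b := (apply_nonneg p u).trans_lt hb
    have hball : p (b⁻¹ • u) ≤ 1 := by
      rw [map_smul_eq_mul, norm_inv, Real.norm_of_nonneg hb0.le]
      exact inv_mul_le_one_of_le₀ hb.le hb0.le
    have hle : ℓ (b⁻¹ • u) ≤ r := h ⟨_, hball, rfl⟩
    rw [map_smul, smul_eq_mul, inv_mul_le_iff₀' hb0] at hle
    exact hle.trans (mul_le_mul_of_nonneg_right hr'.le hb0.le)
  · rintro h _ ⟨u, hu, rfl⟩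
    exact (h u).trans (mul_le_of_le_one_right hr hu)

end Duality

section Box

variable {ι : Type*} [Fintype ι]

theorem forall_mem_Icc_dotProduct_le_iff {R : Type*} [CommRing R] [LinearOrder R]
    [IsStrictOrderedRing R] {l u : ι → R} (hlu : l ≤ u) (z : ι → R) (c : R) :
    (∀ x ∈ Set.Icc l u, z ⬝ᵥ x ≤ c) ↔
      ∃ π τ : ι → R, 0 ≤ π ∧ 0 ≤ τ ∧ π - τ = z ∧ π ⬝ᵥ u - τ ⬝ᵥ l ≤ c := by
  constructor
  · intro h
    let x : ι → R := fun j ↦ if 0 ≤ z j then u j else l j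
    have hx : x ∈ Set.Icc l u := by
      constructor <;> intro j <;> by_cases hj : 0 ≤ z j <;> simp [x, hj, hlu j]
    refine ⟨z⁺, z⁻, posPart_nonneg z, negPart_nonneg z, posPart_sub_negPart z, ?_⟩
    refine le_of_eq_of_le ?_ (h x hx)
    simp only [dotProduct, ← Finset.sum_sub_distrib]
    refine Finset.sum_congr rfl fun j _ ↦ ?_
    by_cases hj : 0 ≤ z j
    · simp [x, hj]
    · simp [x, hj, (not_le.1 hj).le]
  · rintro ⟨π, τ, hπ, hτ, rfl, hc⟩ x ⟨hlx, hxu⟩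
    rw [sub_dotProduct]
    exact (sub_le_sub (dotProduct_le_dotProduct_of_nonneg_left hxu hπ)
      (dotProduct_le_dotProduct_of_nonneg_left hlx hτ)).trans hc

theorem forall_mem_Icc_dotProduct_sub_seminorm_le_iff (p : Seminorm ℝ (ι → ℝ))
    {dn : (ι → ℝ) → ℝ} (hdn : ∀ v, IsLUB {ρ | ∃ u, p u ≤ 1 ∧ ρ = v ⬝ᵥ u} (dn v))
    {r : ℝ} (hr : 0 ≤ r) {l u : ι → ℝ} (hlu : l ≤ u) (v a : ι → ℝ) (c : ℝ) :
    (∀ x ∈ Set.Icc l u, v ⬝ᵥ x - r * p (x - a) ≤ c) ↔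
      ∃ π τ : ι → ℝ, 0 ≤ π ∧ 0 ≤ τ ∧ (v - π + τ) ⬝ᵥ a + (π ⬝ᵥ u - τ ⬝ᵥ l) ≤ c ∧
        dn (π - τ - v) ≤ r := by
  classical
  have dual_le : ∀ q, dn q ≤ r ↔ ∀ z, q ⬝ᵥ z ≤ r * p z := fun q ↦
    isLUB_unitBall_le_iff p (ℓ := dotProductEquiv ℝ ι q) (hdn q) hr
  have hsupp : ∀ q : ι → ℝ, (∀ x ∈ Set.Icc l u, v ⬝ᵥ x + q ⬝ᵥ (x - a) ≤ c) ↔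
      ∃ π τ : ι → ℝ, 0 ≤ π ∧ 0 ≤ τ ∧ π - τ = v + q ∧ π ⬝ᵥ u - τ ⬝ᵥ l ≤ c + q ⬝ᵥ a := fun q ↦ by
    rw [← forall_mem_Icc_dotProduct_le_iff hlu]
    simp only [dotProduct_sub, add_dotProduct, ← add_sub_assoc, sub_le_iff_le_add]
  rw [forall_sub_seminorm_le_iff_exists_dual p hr (Set.nonempty_Icc.2 hlu)
    (g := fun x ↦ v ⬝ᵥ x) ((dotProductEquiv ℝ ι v).concaveOn (convex_Icc l u)) a c,
    (dotProductEquiv ℝ ι).surjective.exists]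
  simp only [dotProductEquiv_apply_apply, ← dual_le, hsupp]
  constructor
  · rintro ⟨q, hq, π, τ, hπ, hτ, heq, hc⟩
    obtain rfl : q = π - τ - v := by rw [heq, add_sub_cancel_left]
    refine ⟨π, τ, hπ, hτ, ?_, hq⟩
    rw [show v - π + τ = -(π - τ - v) by abel, neg_dotProduct]
    linarith
  · rintro ⟨π, τ, hπ, hτ, hc, hq⟩
    refine ⟨π - τ - v, hq, π, τ, hπ, hτ, by abel, ?_⟩
    rw [show v - π + τ = -(π - τ - v) by abel, neg_dotProduct] at hc
    linarith

theorem forall_mem_Icc_neg_one_one_dotProduct_sub_seminorm_le_iff (p : Seminorm ℝ (ι → ℝ))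
    {dn : (ι → ℝ) → ℝ} (hdn : ∀ v, IsLUB {ρ | ∃ u, p u ≤ 1 ∧ ρ = v ⬝ᵥ u} (dn v))
    {r : ℝ} (hr : 0 ≤ r) (v a : ι → ℝ) (c : ℝ) :
    (∀ x ∈ Set.Icc (-1) 1, v ⬝ᵥ x - r * p (x - a) ≤ c) ↔
      ∃ π τ : ι → ℝ, 0 ≤ π ∧ 0 ≤ τ ∧ (v - π + τ) ⬝ᵥ a + ∑ j, (π j + τ j) ≤ c ∧
        dn (π - τ - v) ≤ r := by
  rw [forall_mem_Icc_dotProduct_sub_seminorm_le_iff p hdn hr (neg_le_self zero_le_one)]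
  simp only [dotProduct_neg, sub_neg_eq_add, dotProduct_one, Finset.sum_add_distrib]

end Box

theorem forall_label_hinge_sub_le_iff {E : Type*} {K : Set E} {a : E} (ha : a ∈ K)
    {s d : E → ℝ} (hd : ∀ x, 0 ≤ d x) (hda : d a = 0) {r κ : ℝ} (hr : 0 ≤ r) (hκ : 0 ≤ κ)
    {y₀ : ℝ} (hy₀ : y₀ = 1 ∨ y₀ = -1) (α : ℝ) :
    (∀ x ∈ K, ∀ y : ℝ, (y = 1 ∨ y = -1) →
      max 0 (1 - y * s x) - r * (d x + κ * (if y = y₀ then 0 else 1)) ≤ α) ↔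
    0 ≤ α ∧ (∀ x ∈ K, -y₀ * s x - r * d x ≤ α - 1) ∧
      ∀ x ∈ K, y₀ * s x - r * d x ≤ α - 1 + κ * r := by
  have hlabel : ∀ y : ℝ, (y = 1 ∨ y = -1) ↔ (y = y₀ ∨ y = -y₀) := fun y ↦ by
    rcases hy₀ with rfl | rfl <;> simp [or_comm]
  have hne : -y₀ ≠ y₀ := by rcases hy₀ with rfl | rfl <;> norm_num
  simp only [hlabel, forall_eq_or_imp, forall_eq, if_true, if_neg hne, sub_le_iff_le_add,
    max_le_iff, mul_zero, add_zero, mul_one]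
  constructor
  · intro h
    refine ⟨by simpa [hda] using (h a ha).1.1, fun x hx ↦ ?_, fun x hx ↦ ?_⟩
    · linarith [(h x hx).1.2]
    · linarith [(h x hx).2.2]
  · rintro ⟨hα, hpos, hneg⟩ x hx
    have hrd := mul_nonneg hr (hd x)
    have hκr := mul_nonneg hκ hr
    exact ⟨⟨by linarith, by linarith [hpos x hx]⟩, by linarith, by linarith [hneg x hx]⟩

/-- Proposition (SVM - Special Case 1) of the paper: characterization of `(λ, α, w) ∈ Ω_s`
for distributionally robust SVM with hinge loss, feature support set `X = [−1, 1]^n`, and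
classification transport cost `d_C((x,y),(x',y')) = ‖x − x'‖ + κ·𝟙{y ≠ y'}` on
`ℝ^n × {−1, +1}`. Here `nn` is a norm on `ℝ^n` and `dn` is its dual norm. -/
theorem drfl_svm_box_case1_omega
    (n N : ℕ) (κ : ℝ) (hκ : 0 < κ)
    (nn : (Fin n → ℝ) → ℝ)
    (hnn_nonneg : ∀ x, 0 ≤ nn x)
    (hnn_def : ∀ x, nn x = 0 ↔ x = 0)
    (hnn_add : ∀ x y, nn (x + y) ≤ nn x + nn y)
    (hnn_smul : ∀ (c : ℝ) x, nn (c • x) = |c| * nn x)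
    (dn : (Fin n → ℝ) → ℝ)
    (hdn : ∀ v, IsLUB {ρ : ℝ | ∃ u, nn u ≤ 1 ∧ ρ = ∑ j, v j * u j} (dn v))
    (xhat : Fin N → Fin n → ℝ) (hdata : ∀ i j, -1 ≤ xhat i j ∧ xhat i j ≤ 1)
    (yhat : Fin N → ℝ) (hyhat : ∀ i, yhat i = 1 ∨ yhat i = -1)
    (lam : ℝ) (hlam : 0 ≤ lam) (α : Fin N → ℝ) (w : Fin n → ℝ) :
    (∀ i, ∀ x : Fin n → ℝ, (∀ j, -1 ≤ x j ∧ x j ≤ 1) →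
        ∀ y : ℝ, (y = 1 ∨ y = -1) →
        max 0 (1 - y * ∑ j, w j * x j)
          - lam * (nn (x - xhat i) + κ * (if y = yhat i then 0 else 1)) ≤ α i)
    ↔
    ((∀ i, 0 ≤ α i) ∧ ∀ i, ∃ πp πm τp τm : Fin n → ℝ,
      (∀ j, 0 ≤ πp j) ∧ (∀ j, 0 ≤ πm j) ∧ (∀ j, 0 ≤ τp j) ∧ (∀ j, 0 ≤ τm j) ∧
      1 + (∑ j, (-(yhat i) * w j - πp j + τp j) * xhat i j) + (∑ j, (πp j + τp j)) ≤ α i ∧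
      1 + (∑ j, (yhat i * w j - πm j + τm j) * xhat i j) + (∑ j, (πm j + τm j))
        - κ * lam ≤ α i ∧
      dn (fun j => πp j - τp j + yhat i * w j) ≤ lam ∧
      dn (fun j => πm j - τm j - yhat i * w j) ≤ lam) := by
  let p : Seminorm ℝ (Fin n → ℝ) := Seminorm.of nn hnn_add hnn_smul
  have box : ∀ x : Fin n → ℝ, (∀ j, -1 ≤ x j ∧ x j ≤ 1) ↔ x ∈ Set.Icc (-1) 1 :=
    fun _ ↦ forall_and
  have label_iff : ∀ i y c,
      (∀ x ∈ Set.Icc (-1) 1, y * ∑ j, w j * x j - lam * nn (x - xhat i) ≤ c) ↔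
      ∃ π τ : Fin n → ℝ, (∀ j, 0 ≤ π j) ∧ (∀ j, 0 ≤ τ j) ∧
        ∑ j, (y * w j - π j + τ j) * xhat i j + ∑ j, (π j + τ j) ≤ c ∧
        dn (fun j ↦ π j - τ j - y * w j) ≤ lam := fun i y c ↦ by
    simpa only [smul_dotProduct] using!
      forall_mem_Icc_neg_one_one_dotProduct_sub_seminorm_le_iff p hdn hlam (y • w) (xhat i) c
  simp only [box] at hdata ⊢
  rw [← forall_and]
  refine forall_congr' fun i ↦ (forall_label_hinge_sub_le_iff (hdata i) (fun _ ↦ hnn_nonneg _)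
    (by rw [sub_self, (hnn_def 0).2 rfl]) hlam hκ.le (hyhat i) (α i)).trans <|
      and_congr_right fun _ ↦ ?_
  rw [label_iff, label_iff]
  simp only [neg_mul, sub_neg_eq_add]
  constructor
  · rintro ⟨⟨πp, τp, hπp, hτp, hcp, hdp⟩, πm, τm, hπm, hτm, hcm, hdm⟩
    exact ⟨πp, πm, τp, τm, hπp, hπm, hτp, hτm, by linarith, by linarith, hdp, hdm⟩
  · rintro ⟨πp, πm, τp, τm, hπp, hπm, hτp, hτm, hcp, hcm, hdp, hdm⟩
    exact ⟨⟨πp, τp, hπp, hτp, by linarith, hdp⟩, πm, τm, hπm, hτm, by linarith, hdm⟩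
end
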